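/- Let 𝓔 be a representation-finite quiver exceptional set of Q. Then there are finitely many compatible subsets C_1,…,C_r of Ψ(Q)_{≥−1} such that Cone(𝓔) = ⋃_{i=1}^r Cone(C_i). -/

import Mathlib

set_option autoImplicit false

noncomputable section

open scoped BigOperators

/-! Basic setup for representations of a quiver with vertex set `V`, arrow set `A`,
tail map `t` and head map `h`, over a field `K`. -/

variable (K : Type) [Field K]
variable {V A : Type} [Fintype V] [DecidableEq V] [Fintype A]

/-- The Euler form of the quiver `(V, A, t, h)`. -/
def eulerForm {R : Type} [CommRing R] (t h : A → V) (x y : V → R) : R :=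
  ∑ i, x i * y i - ∑ a, x (t a) * y (h a)

def natZ (x : V → ℕ) : V → ℤ := fun i => (x i : ℤ)
def intQ (x : V → ℤ) : V → ℚ := fun i => (x i : ℚ)
def natQ (x : V → ℕ) : V → ℚ := fun i => (x i : ℚ)

/-- The weight `⟨α,·⟩`. -/
def weightL (t h : A → V) (α : V → ℤ) : V → ℤ :=
  fun i => eulerForm t h α (fun j => if j = i then 1 else 0)

/-- The weight `−⟨·,α⟩`. -/
def weightR (t h : A → V) (α : V → ℤ) : V → ℤ :=
  fun i => - eulerForm t h (fun j => if j = i then 1 else 0) α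

/-- `IsPathFrom t h i p j` : the list of arrows `p` is a path from `i` to `j`. -/
def IsPathFrom (t h : A → V) : V → List A → V → Prop
  | i, [], j => i = j
  | i, a :: p, j => t a = i ∧ IsPathFrom t h (h a) p j

/-- The quiver has no (nontrivial) oriented cycles. -/
def Acyclic (t h : A → V) : Prop := ∀ (i : V) (p : List A), IsPathFrom t h i p i → p = []

/-- The dimension vector `γ_i` of the projective indecomposable at `i`:
`γ_i(j)` is the number of paths from `i` to `j`. -/
def gammaRoot (t h : A → V) (i : V) : V → ℕ :=
  fun j => Set.ncard {p : List A | IsPathFrom t h i p j}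

/-- A finite-dimensional representation of the quiver `(V, A, t, h)` over `K`. -/
structure QuivRep (K : Type) [Field K] (V A : Type) (t h : A → V) : Type 1 where
  sp : V → Type
  [inst1 : ∀ i, AddCommGroup (sp i)]
  [inst2 : ∀ i, Module K (sp i)]
  [inst3 : ∀ i, FiniteDimensional K (sp i)]
  map : ∀ a : A, sp (t a) →ₗ[K] sp (h a)

attribute [instance] QuivRep.inst1 QuivRep.inst2 QuivRep.inst3

namespace QuivRep

variable {K} {t h : A → V}

/-- The dimension vector of a representation. -/
def dimVec (X : QuivRep K V A t h) : V → ℕ := fun i => Module.finrank K (X.sp i)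

/-- A subrepresentation. -/
structure Sub (X : QuivRep K V A t h) where
  sub : ∀ i, Submodule K (X.sp i)
  le : ∀ a : A, ∀ x ∈ sub (t a), X.map a x ∈ sub (h a)

/-- The dimension vector of a subrepresentation. -/
def Sub.dimVec {X : QuivRep K V A t h} (U : Sub X) : V → ℕ :=
  fun i => Module.finrank K (U.sub i)

/-- The space `Hom_Q(X,Y)` of morphisms of representations, as a submodule of
`Π i, Hom_K(X(i),Y(i))`. -/
def homS (X Y : QuivRep K V A t h) : Submodule K (∀ i, X.sp i →ₗ[K] Y.sp i) where
  carrier := {φ | ∀ a : A, (φ (h a)).comp (X.map a) = (Y.map a).comp (φ (t a))}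
  zero_mem' := by intro a; simp
  add_mem' := by
    intro f g hf hg a
    simp only [Pi.add_apply, LinearMap.add_comp, LinearMap.comp_add, hf a, hg a]
  smul_mem' := by
    intro c f hf a
    simp only [Pi.smul_apply, LinearMap.smul_comp, LinearMap.comp_smul, hf a]

/-- The dimension of `Hom_Q(X,Y)`. -/
def homDim (X Y : QuivRep K V A t h) : ℕ := Module.finrank K (homS X Y)

/-- The map `d^X_Y` from Ringel's canonical exact sequence. -/
def dmap (X Y : QuivRep K V A t h) :
    (∀ i, X.sp i →ₗ[K] Y.sp i) →ₗ[K] (∀ a : A, X.sp (t a) →ₗ[K] Y.sp (h a)) where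
  toFun φ := fun a => (φ (h a)).comp (X.map a) - (Y.map a).comp (φ (t a))
  map_add' f g := by
    funext a
    simp only [Pi.add_apply, LinearMap.add_comp, LinearMap.comp_add]
    abel
  map_smul' c f := by
    funext a
    simp only [Pi.smul_apply, LinearMap.smul_comp, LinearMap.comp_smul, smul_sub,
      RingHom.id_apply]

/-- The dimension of `Ext^1_Q(X,Y)`, i.e. of the cokernel of `d^X_Y`. -/
def extDim (X Y : QuivRep K V A t h) : ℕ :=
  Module.finrank K ((∀ a : A, X.sp (t a) →ₗ[K] Y.sp (h a)) ⧸ LinearMap.range (dmap X Y))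

/-- A rigid representation: `Ext^1_Q(X,X) = 0`. -/
def IsRigid (X : QuivRep K V A t h) : Prop := extDim X X = 0

/-- A Schur representation: `End_Q(X) = K·id`. -/
def IsSchur (X : QuivRep K V A t h) : Prop := homDim X X = 1

/-- An exceptional representation: rigid and Schur. -/
def IsExceptional (X : QuivRep K V A t h) : Prop := IsRigid X ∧ IsSchur X

end QuivRep

/-- `β` is a real Schur root: the dimension vector of an exceptional representation. -/
def isRealSchurRoot (t h : A → V) (β : V → ℕ) : Prop :=
  ∃ X : QuivRep K V A t h, X.dimVec = β ∧ X.IsExceptional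

/-- `ext_Q(α,β)` : the generic (minimal) value of `dim Ext^1_Q` on pairs of
representations of dimension vectors `α`, `β`. -/
def extMin (t h : A → V) (α β : V → ℕ) : ℕ :=
  sInf {n | ∃ X Y : QuivRep K V A t h, X.dimVec = α ∧ Y.dimVec = β ∧ QuivRep.extDim X Y = n}

/-- `hom_Q(α,β)` : the generic (minimal) value of `dim Hom_Q`. -/
def homMin (t h : A → V) (α β : V → ℕ) : ℕ :=
  sInf {n | ∃ X Y : QuivRep K V A t h, X.dimVec = α ∧ Y.dimVec = β ∧ QuivRep.homDim X Y = n}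

/-- `β' ↪ β` : every representation of dimension vector `β` has a subrepresentation of
dimension vector `β'`. -/
def Embeds (t h : A → V) (β' β : V → ℕ) : Prop :=
  ∀ X : QuivRep K V A t h, X.dimVec = β → ∃ U : QuivRep.Sub X, U.dimVec = β'

/-- `σ`-semi-stability of a representation. -/
def IsSemistable {t h : A → V} (σ : V → ℤ) (X : QuivRep K V A t h) : Prop :=
  (∑ i, σ i * (X.dimVec i : ℤ)) = 0 ∧
  ∀ U : QuivRep.Sub X, (∑ i, σ i * (U.dimVec i : ℤ)) ≤ 0

/-- `σ`-stability of a representation. -/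
def IsStable {t h : A → V} (σ : V → ℤ) (X : QuivRep K V A t h) : Prop :=
  (∑ i, σ i * (X.dimVec i : ℤ)) = 0 ∧ X.dimVec ≠ (fun _ => 0) ∧
  ∀ U : QuivRep.Sub X, U.dimVec ≠ (fun _ => 0) → U.dimVec ≠ X.dimVec →
    (∑ i, σ i * (U.dimVec i : ℤ)) < 0

/-- Isomorphism of representations. -/
def RepIso {t h : A → V} (X Y : QuivRep K V A t h) : Prop :=
  ∃ e : ∀ i, X.sp i ≃ₗ[K] Y.sp i,
    ∀ (a : A) (x : X.sp (t a)), e (h a) (X.map a x) = Y.map a (e (t a) x)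

/-- A quiver exceptional sequence of dimension vectors. -/
def IsQES (t h : A → V) {l : ℕ} (b : Fin l → V → ℕ) : Prop :=
  (∀ j, isRealSchurRoot K t h (b j)) ∧
  ∀ i j : Fin l, i < j →
    homMin K t h (b i) (b j) = 0 ∧ extMin K t h (b i) (b j) = 0 ∧
      eulerForm t h (natZ (b j)) (natZ (b i)) ≤ 0

/-- The cone of nonnegative rational linear combinations of a finite set of integral
vectors. -/
def coneOf (C : Finset (V → ℤ)) : Set (V → ℚ) :=
  {x | ∃ lam : (V → ℤ) → ℚ, (∀ c, 0 ≤ lam c) ∧ x = ∑ c ∈ C, lam c • intQ c}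

/-- A compatible subset of the set `Ψ(Q)_{≥ -1}` of almost positive real Schur roots. -/
def IsCompatible (t h : A → V) (C : Finset (V → ℤ)) : Prop :=
  (∀ x ∈ C, (∃ β : V → ℕ, isRealSchurRoot K t h β ∧ x = natZ β) ∨
      (∃ i : V, x = fun j => -(gammaRoot t h i j : ℤ))) ∧
  (∀ x ∈ C, ∀ y ∈ C, x ≠ y →
    (∀ β₁ β₂ : V → ℕ, isRealSchurRoot K t h β₁ → isRealSchurRoot K t h β₂ →
      x = natZ β₁ → y = natZ β₂ → extMin K t h β₁ β₂ = 0) ∧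
    (∀ (β : V → ℕ) (i : V), isRealSchurRoot K t h β →
      x = natZ β → y = (fun j => -(gammaRoot t h i j : ℤ)) → β i = 0))

/-- The domain of semi-invariants `D(β) ⊆ ℚ^{Q_0}`. -/
def Dom (t h : A → V) (β : V → ℕ) : Set (V → ℚ) :=
  {x | eulerForm t h x (natQ β) = 0 ∧
    ∀ β' : V → ℕ, Embeds K t h β' β → eulerForm t h x (natQ β') ≤ 0}

/-- A quiver exceptional set: a subset of `Ψ(Q)_{≥ -1}` of the form
`{β_1,…,β_l, −γ_{i_{l+1}},…,−γ_{i_m}}` with `β_j(i_k) = 0` and whose real-Schur-root part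
can be ordered into a quiver exceptional sequence. -/
def IsQExcSet (t h : A → V) (E : Finset (V → ℤ)) : Prop :=
  ∃ (l m : ℕ) (b : Fin l → V → ℕ) (g : Fin m → V),
    Function.Injective b ∧ Function.Injective g ∧ IsQES K t h b ∧
    (∀ j k, b j (g k) = 0) ∧
    (E : Set (V → ℤ)) =
      (Set.range fun j => natZ (b j)) ∪
      (Set.range fun k => (fun v => -(gammaRoot t h (g k) v : ℤ)))


/-- The underlying graph of the quiver is connected. -/
def IsConnectedQuiver (t h : A → V) : Prop :=
  ∀ i j : V,
    Relation.ReflTransGen (fun u v => ∃ a, (t a = u ∧ h a = v) ∨ (t a = v ∧ h a = u)) i j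

/-- Morphisms of representations. -/
structure RepHom {K : Type} [Field K] {V A : Type} {t h : A → V}
    (X Y : QuivRep K V A t h) : Type where
  app : ∀ i, X.sp i →ₗ[K] Y.sp i
  comm : ∀ a : A, (app (h a)).comp (X.map a) = (Y.map a).comp (app (t a))

namespace RepHom

variable {K₀ : Type} [Field K₀] {t h : A → V}

/-- The identity morphism. -/
def idHom (X : QuivRep K₀ V A t h) : RepHom X X :=
  ⟨fun _ => LinearMap.id, fun a => by ext x; simp⟩

/-- Composition of morphisms. -/
def comp {X Y Z : QuivRep K₀ V A t h} (f : RepHom X Y) (g : RepHom Y Z) : RepHom X Z :=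
  ⟨fun i => (g.app i).comp (f.app i), fun a => by
    ext x
    have hf := LinearMap.congr_fun (f.comm a) x
    have hg := LinearMap.congr_fun (g.comm a) (f.app (t a) x)
    simp only [LinearMap.comp_apply] at hf hg ⊢
    rw [hf, hg]⟩

/-- Sum of morphisms. -/
def add {X Y : QuivRep K₀ V A t h} (f g : RepHom X Y) : RepHom X Y :=
  ⟨fun i => f.app i + g.app i, fun a => by
    simp only [LinearMap.add_comp, LinearMap.comp_add, f.comm a, g.comm a]⟩

/-- Scalar multiple of a morphism. -/
def smul {X Y : QuivRep K₀ V A t h} (c : K₀) (f : RepHom X Y) : RepHom X Y :=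
  ⟨fun i => c • f.app i, fun a => by
    simp only [LinearMap.smul_comp, LinearMap.comp_smul, f.comm a]⟩

end RepHom

/-- The number of arrows `i → j` in the Ext-quiver `Q(𝓔)` of a sequence of dimension
vectors: `−⟨β_i, β_j⟩` for `i ≠ j`. -/
def extMult (t h : A → V) {l : ℕ} (b : Fin l → V → ℕ) (i j : Fin l) : ℕ :=
  if i = j then 0 else (-(eulerForm t h (natZ (b i)) (natZ (b j)))).toNat

/-- The arrow set of the Ext-quiver `Q(𝓔)`. -/
abbrev ExtArrow (t h : A → V) {l : ℕ} (b : Fin l → V → ℕ) : Type :=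
  (i : Fin l) × (j : Fin l) × Fin (extMult t h b i j)

/-- The representation space `rep(Q,β)` as a product of matrix spaces. -/
abbrev RepSpace (t h : A → V) (β : V → ℕ) : Type :=
  ∀ a : A, Matrix (Fin (β (h a))) (Fin (β (t a))) K

/-- The (base-change) action of `GL(β)` on `rep(Q,β)`. -/
def glAct (t h : A → V) {β : V → ℕ}
    (g : ∀ i, Matrix.GeneralLinearGroup (Fin (β i)) K) (W : RepSpace K t h β) :
    RepSpace K t h β :=
  fun a => (g (h a) : Matrix (Fin (β (h a))) (Fin (β (h a))) K) * W a *
    (((g (t a))⁻¹ : Matrix.GeneralLinearGroup (Fin (β (t a))) K) :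
      Matrix (Fin (β (t a))) (Fin (β (t a))) K)

/-- A polynomial function on `rep(Q,β)`. -/
def IsPolyFun (t h : A → V) {β : V → ℕ} (f : RepSpace K t h β → K) : Prop :=
  ∃ P : MvPolynomial ((a : A) × (Fin (β (h a)) × Fin (β (t a)))) K,
    ∀ W, f W = MvPolynomial.eval (fun x => W x.1 x.2.1 x.2.2) P

/-- The weight space `SI(Q,β)_σ` of semi-invariant polynomial functions of weight `σ`. -/
def SIweight (t h : A → V) (β : V → ℕ) (σ : V → ℤ) :
    Submodule K (RepSpace K t h β → K) where
  carrier := {f | IsPolyFun K t h f ∧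
    ∀ (g : ∀ i, Matrix.GeneralLinearGroup (Fin (β i)) K) (W : RepSpace K t h β),
      f (glAct K t h g W) =
        (((∏ i, (Matrix.GeneralLinearGroup.det (g i)) ^ σ i : Kˣ) : K)) * f W}
  zero_mem' := by
    refine ⟨⟨0, by simp⟩, by simp⟩
  add_mem' := by
    rintro f g ⟨⟨P, hP⟩, hf⟩ ⟨⟨Q, hQ⟩, hg⟩
    refine ⟨⟨P + Q, fun W => ?_⟩, fun gg W => ?_⟩
    · simp [hP W, hQ W]
    · simp only [Pi.add_apply, hf gg W, hg gg W]; ring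
  smul_mem' := by
    rintro c f ⟨⟨P, hP⟩, hf⟩
    refine ⟨⟨MvPolynomial.C c * P, fun W => ?_⟩, fun gg W => ?_⟩
    · simp [hP W]
    · simp only [Pi.smul_apply, hf gg W, smul_eq_mul]; ring

/-- Entry of a matrix accessed through natural-number indices. -/
def entryN {m n : ℕ} (M : Matrix (Fin m) (Fin n) K) (r c : ℕ) : K :=
  if hr : r < m then (if hc : c < n then M ⟨r, hr⟩ ⟨c, hc⟩ else 0) else 0

/-- The matrix of the map `d^V_W` (with `V` of dimension vector `α` varying and `W` of
dimension vector `w` fixed), in the standard bases. -/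
def schofieldMatrix (t h : A → V) {α w : V → ℕ}
    (Vm : RepSpace K t h α) (W : RepSpace K t h w) :
    Matrix ((a : A) × (Fin (w (h a)) × Fin (α (t a)))) ((i : V) × (Fin (w i) × Fin (α i))) K :=
  fun r c =>
    (if c.1 = h r.1 ∧ (c.2.1 : ℕ) = (r.2.1 : ℕ) then
      entryN K (Vm r.1) (c.2.2 : ℕ) (r.2.2 : ℕ) else 0)
    - (if c.1 = t r.1 ∧ (c.2.2 : ℕ) = (r.2.2 : ℕ) then
      entryN K (W r.1) (r.2.1 : ℕ) (c.2.1 : ℕ) else 0)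

/-- The Schofield semi-invariant `c_W : rep(Q,α) → K`, `V ↦ det d^V_W` (defined when
`⟨α, dim W⟩ = 0`, i.e. when `d^V_W` is a square matrix). -/
def schofieldSI (t h : A → V) {α w : V → ℕ} (W : RepSpace K t h w)
    (Vm : RepSpace K t h α) : K :=
  if hc : Fintype.card ((i : V) × (Fin (w i) × Fin (α i))) =
      Fintype.card ((a : A) × (Fin (w (h a)) × Fin (α (t a)))) then
    ((schofieldMatrix K t h Vm W).submatrix (Fintype.equivOfCardEq hc) id).det
  else 0

/-- The representation of `Q` attached to a point of `rep(Q,β)`. -/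
def toRep (t h : A → V) {β : V → ℕ} (W : RepSpace K t h β) : QuivRep K V A t h where
  sp i := Fin (β i) → K
  map a := Matrix.mulVecLin (W a)

/-! ## Elementary homological algebra of quiver representations -/

set_option linter.unusedSectionVars false

section Helpers

variable {K} {t h : A → V}

namespace QuivRep

/-- Families of linear maps between two representations. -/
abbrev Fam (X Y : QuivRep K V A t h) : Type := ∀ i, X.sp i →ₗ[K] Y.sp i

/-- A family of linear maps is a morphism. -/
def IsHom {X Y : QuivRep K V A t h} (f : Fam X Y) : Prop :=
  ∀ (a : A) (x : X.sp (t a)), f (h a) (X.map a x) = Y.map a (f (t a) x)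

/-- Composition of families (first `f`, then `g`). -/
def cmp {X Y Z : QuivRep K V A t h} (g : Fam Y Z) (f : Fam X Y) : Fam X Z :=
  fun i => (g i).comp (f i)

/-- The identity family. -/
def idf (X : QuivRep K V A t h) : Fam X X := fun _ => LinearMap.id

@[simp] theorem cmp_apply {X Y Z : QuivRep K V A t h} (g : Fam Y Z) (f : Fam X Y) (i : V)
    (x : X.sp i) : cmp g f i x = g i (f i x) := rfl

@[simp] theorem idf_apply (X : QuivRep K V A t h) (i : V) (x : X.sp i) : idf X i x = x := rfl

theorem mem_homS {X Y : QuivRep K V A t h} (f : Fam X Y) : f ∈ homS X Y ↔ IsHom f := by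
  constructor
  · intro hf a x
    exact LinearMap.congr_fun (hf a) x
  · intro hf a
    ext x
    exact hf a x

theorem isHom_id (X : QuivRep K V A t h) : IsHom (idf X) := fun _ _ => rfl

theorem isHom_zero (X Y : QuivRep K V A t h) : IsHom (0 : Fam X Y) := fun a x => by simp

theorem IsHom.comp {X Y Z : QuivRep K V A t h} {g : Fam Y Z} {f : Fam X Y}
    (hg : IsHom g) (hf : IsHom f) : IsHom (cmp g f) := fun a x => by
  simp [hf a x, hg a]

theorem IsHom.add {X Y : QuivRep K V A t h} {g f : Fam X Y}
    (hg : IsHom g) (hf : IsHom f) : IsHom (g + f) := fun a x => by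
  simp [hf a x, hg a x]

theorem IsHom.sub {X Y : QuivRep K V A t h} {g f : Fam X Y}
    (hg : IsHom g) (hf : IsHom f) : IsHom (g - f) := fun a x => by
  simp [hf a x, hg a x]

theorem IsHom.smul {X Y : QuivRep K V A t h} {f : Fam X Y} (c : K)
    (hf : IsHom f) : IsHom (c • f) := fun a x => by
  simp [hf a x]

theorem fam_ne_zero {X Y : QuivRep K V A t h} {f : Fam X Y} (hf : f ≠ 0) :
    ∃ i x, f i x ≠ 0 := by
  by_contra hcon
  push Not at hcon
  apply hf
  funext i
  ext x
  exact hcon i x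

theorem fam_ext {X Y : QuivRep K V A t h} {f g : Fam X Y} (hfg : ∀ i x, f i x = g i x) :
    f = g := by
  funext i
  ext x
  exact hfg i x

theorem ker_dmap (X Y : QuivRep K V A t h) : LinearMap.ker (dmap X Y) = homS X Y := by
  ext f
  rw [LinearMap.mem_ker]
  constructor
  · intro hf a
    have := congrFun hf a
    exact sub_eq_zero.mp this
  · intro hf
    funext a
    exact sub_eq_zero.mpr (hf a)

theorem dmap_apply (X Y : QuivRep K V A t h) (f : Fam X Y) (a : A) (x : X.sp (t a)) :
    dmap X Y f a x = f (h a) (X.map a x) - Y.map a (f (t a) x) := rfl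

theorem euler_eq (X Y : QuivRep K V A t h) :
    (homDim X Y : ℤ) - extDim X Y = eulerForm t h (natZ X.dimVec) (natZ Y.dimVec) := by
  have h1 := (dmap X Y).finrank_range_add_finrank_ker
  have h2 := (LinearMap.range (dmap X Y)).finrank_quotient_add_finrank
  rw [ker_dmap] at h1
  have h3 : Module.finrank K (∀ i, X.sp i →ₗ[K] Y.sp i) =
      ∑ i, X.dimVec i * Y.dimVec i := by
    rw [Module.finrank_pi_fintype]
    simp [Module.finrank_linearMap, dimVec]
  have h4 : Module.finrank K (∀ a, X.sp (t a) →ₗ[K] Y.sp (h a)) =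
      ∑ a, X.dimVec (t a) * Y.dimVec (h a) := by
    rw [Module.finrank_pi_fintype]
    simp [Module.finrank_linearMap, dimVec]
  rw [h3] at h1
  rw [h4] at h2
  unfold eulerForm natZ homDim extDim
  have h1' := congrArg (Nat.cast : ℕ → ℤ) h1
  have h2' := congrArg (Nat.cast : ℕ → ℤ) h2
  push_cast at h1' h2'
  rw [← h1', ← h2']
  ring

theorem extDim_eq_zero_iff (X Y : QuivRep K V A t h) :
    extDim X Y = 0 ↔ Function.Surjective (dmap X Y) := by
  unfold extDim
  rw [Module.finrank_zero_iff, Submodule.Quotient.subsingleton_iff,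
    LinearMap.range_eq_top]

theorem homDim_pos_iff (X Y : QuivRep K V A t h) :
    0 < homDim X Y ↔ ∃ f : Fam X Y, IsHom f ∧ f ≠ 0 := by
  unfold homDim
  rw [Module.finrank_pos_iff, Submodule.nontrivial_iff_ne_bot, Submodule.ne_bot_iff]
  simp only [mem_homS]

theorem homDim_eq_zero_iff (X Y : QuivRep K V A t h) :
    homDim X Y = 0 ↔ ∀ f : Fam X Y, IsHom f → f = 0 := by
  have := homDim_pos_iff X Y
  constructor
  · intro h0 f hf
    by_contra hne
    have := this.mpr ⟨f, hf, hne⟩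
    omega
  · intro hall
    by_contra hne
    obtain ⟨f, hf, hne⟩ := this.mp (Nat.pos_of_ne_zero hne)
    exact hne (hall f hf)

/-- Vertexwise injectivity. -/
def Inj {X Y : QuivRep K V A t h} (f : Fam X Y) : Prop := ∀ i, Function.Injective (f i)

/-- Vertexwise surjectivity. -/
def Surj {X Y : QuivRep K V A t h} (f : Fam X Y) : Prop := ∀ i, Function.Surjective (f i)

theorem inj_of_ker {X Y : QuivRep K V A t h} {f : Fam X Y}
    (hf : ∀ i x, f i x = 0 → x = 0) : Inj f := fun i =>
  (injective_iff_map_eq_zero (f i)).mpr (hf i)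

/-- A brick endomorphism is a scalar. -/
theorem schur_scalar {X : QuivRep K V A t h} (hX : IsSchur X) (f : Fam X X) (hf : IsHom f) :
    ∃ c : K, f = c • idf X := by
  have hX' : Module.finrank K (homS X X) = 1 := hX
  have hne : (⟨idf X, (mem_homS _).mpr (isHom_id X)⟩ : homS X X) ≠ 0 := by
    intro h0
    have h0' : idf X = 0 := congrArg Subtype.val h0
    have : homDim X X = 0 := by
      rw [homDim_eq_zero_iff]
      intro g _
      apply fam_ext
      intro i x
      have : g i (idf X i x) = 0 := by rw [h0']; simp
      simpa using this
    unfold IsSchur at hX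
    omega
  obtain ⟨c, hc⟩ := (finrank_eq_one_iff_of_nonzero' _ hne).mp hX' ⟨f, (mem_homS _).mpr hf⟩
  exact ⟨c, (congrArg Subtype.val hc).symm⟩

theorem schur_nonzero {X : QuivRep K V A t h} (hX : IsSchur X) : ∃ i, ∃ x : X.sp i, x ≠ 0 := by
  have : 0 < homDim X X := by unfold IsSchur at hX; omega
  obtain ⟨f, _, hne⟩ := (homDim_pos_iff X X).mp this
  obtain ⟨i, x, hx⟩ := fam_ne_zero hne
  exact ⟨i, x, fun h0 => hx (by simp [h0])⟩

/-- `Ext` is contravariantly right exact. -/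
theorem extDim_le_of_inj {X' X : QuivRep K V A t h} (Y : QuivRep K V A t h) (f : Fam X' X)
    (hf : IsHom f) (hi : Inj f) : extDim X' Y ≤ extDim X Y := by
  let P : (∀ a : A, X.sp (t a) →ₗ[K] Y.sp (h a)) →ₗ[K] (∀ a : A, X'.sp (t a) →ₗ[K] Y.sp (h a)) :=
    { toFun := fun c a => (c a).comp (f (t a))
      map_add' := fun c d => by funext a; ext x; simp
      map_smul' := fun c d => by funext a; ext x; simp }
  have hP : LinearMap.range (dmap X Y) ≤ (LinearMap.range (dmap X' Y)).comap P := by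
    rintro _ ⟨φ, rfl⟩
    refine ⟨cmp φ f, ?_⟩
    funext a
    ext x
    simp [P, dmap_apply, hf a x]
  have hPs : Function.Surjective P := by
    intro c
    choose r hr using fun a : A => (f (t a)).exists_leftInverse_of_injective
      (LinearMap.ker_eq_bot.mpr (hi (t a)))
    refine ⟨fun a => (c a).comp (r a), ?_⟩
    funext a
    ext x
    have := LinearMap.congr_fun (hr a) x
    simp at this
    simp [P, this]
  unfold extDim
  refine LinearMap.finrank_le_finrank_of_surjective
    (f := Submodule.mapQ _ _ P hP) ?_
  intro y
  obtain ⟨y, rfl⟩ := Submodule.mkQ_surjective _ y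
  obtain ⟨x, rfl⟩ := hPs y
  exact ⟨Submodule.mkQ _ x, by simp⟩

/-- `Ext` is covariantly right exact. -/
theorem extDim_le_of_surj {Y Y' : QuivRep K V A t h} (X : QuivRep K V A t h) (f : Fam Y Y')
    (hf : IsHom f) (hi : Surj f) : extDim X Y' ≤ extDim X Y := by
  let P : (∀ a : A, X.sp (t a) →ₗ[K] Y.sp (h a)) →ₗ[K] (∀ a : A, X.sp (t a) →ₗ[K] Y'.sp (h a)) :=
    { toFun := fun c a => (f (h a)).comp (c a)
      map_add' := fun c d => by funext a; ext x; simp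
      map_smul' := fun c d => by funext a; ext x; simp }
  have hP : LinearMap.range (dmap X Y) ≤ (LinearMap.range (dmap X Y')).comap P := by
    rintro _ ⟨φ, rfl⟩
    refine ⟨cmp f φ, ?_⟩
    funext a
    ext x
    simp [P, dmap_apply, hf a]
  have hPs : Function.Surjective P := by
    intro c
    choose r hr using fun a : A => (f (h a)).exists_rightInverse_of_surjective
      (LinearMap.range_eq_top.mpr (hi (h a)))
    refine ⟨fun a => (r a).comp (c a), ?_⟩
    funext a
    ext x
    have := LinearMap.congr_fun (hr a) (c a x)
    simp at this
    simp [P, this]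
  unfold extDim
  refine LinearMap.finrank_le_finrank_of_surjective
    (f := Submodule.mapQ _ _ P hP) ?_
  intro y
  obtain ⟨y, rfl⟩ := Submodule.mkQ_surjective _ y
  obtain ⟨x, rfl⟩ := hPs y
  exact ⟨Submodule.mkQ _ x, by simp⟩

/-- A short exact sequence of representations. -/
structure SES {X Y Z : QuivRep K V A t h} (i : Fam X Y) (p : Fam Y Z) : Prop where
  hi : IsHom i
  hp : IsHom p
  inj : Inj i
  surj : Surj p
  zero : ∀ v x, p v (i v x) = 0
  exact : ∀ v y, p v y = 0 → ∃ x, i v x = y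

theorem SES.dim {X Y Z : QuivRep K V A t h} {i : Fam X Y} {p : Fam Y Z} (S : SES i p) :
    Y.dimVec = X.dimVec + Z.dimVec := by
  funext v
  have h1 := (p v).finrank_range_add_finrank_ker
  have h2 : LinearMap.ker (p v) = LinearMap.range (i v) := by
    ext y
    constructor
    · exact fun hy => S.exact v y hy
    · rintro ⟨x, rfl⟩
      exact S.zero v x
  rw [h2, LinearMap.range_eq_top.mpr (S.surj v), finrank_top,
    LinearMap.finrank_range_of_inj (S.inj v)] at h1
  simp only [dimVec, Pi.add_apply]
  omega

/-- Extending a morphism along a monomorphism when the obstruction group vanishes. -/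
theorem SES.lift {k M I : QuivRep K V A t h} {i : Fam k M} {p : Fam M I} (S : SES i p)
    {Z : QuivRep K V A t h} (hz : extDim I Z = 0) (f : Fam k Z) (hf : IsHom f) :
    ∃ g : Fam M Z, IsHom g ∧ ∀ v x, g v (i v x) = f v x := by
  choose r hr using fun v => (i v).exists_leftInverse_of_injective
      (LinearMap.ker_eq_bot.mpr (S.inj v))
  choose s hs using fun v => (p v).exists_rightInverse_of_surjective
      (LinearMap.range_eq_top.mpr (S.surj v))
  have hr' : ∀ v x, r v (i v x) = x := fun v x => LinearMap.congr_fun (hr v) x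
  have hs' : ∀ v x, p v (s v x) = x := fun v x => LinearMap.congr_fun (hs v) x
  let g0 : Fam M Z := fun v => (f v).comp (r v)
  obtain ⟨ψ, hψ⟩ := (extDim_eq_zero_iff I Z).mp hz (fun a => (dmap M Z g0 a).comp (s (t a)))
  refine ⟨g0 - cmp ψ p, ?_, ?_⟩
  · intro a x
    have h1 := LinearMap.congr_fun (congrFun hψ a) (p (t a) x)
    rw [dmap_apply] at h1
    simp only [LinearMap.comp_apply] at h1
    obtain ⟨y, hy⟩ := S.exact (t a) (s (t a) (p (t a) x) - x) (by simp [hs'])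
    have h2 : s (t a) (p (t a) x) = x + i (t a) y := by rw [hy]; abel
    have h3 : dmap M Z g0 a (i (t a) y) = 0 := by
      rw [dmap_apply, ← S.hi a y]
      simp [g0, hr', hf a y]
    rw [h2, map_add, h3, add_zero, dmap_apply, ← S.hp a x] at h1
    simp only [Pi.sub_apply, LinearMap.sub_apply, cmp_apply, map_sub]
    rw [sub_eq_sub_iff_sub_eq_sub]
    exact h1.symm
  · intro v x
    simp [g0, hr', S.zero]

/-! ### Sub and quotient representations -/

/-- The subrepresentation on a stable family of subspaces. -/
def subRep (X : QuivRep K V A t h) (p : ∀ i, Submodule K (X.sp i))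
    (hp : ∀ a, ∀ x ∈ p (t a), X.map a x ∈ p (h a)) : QuivRep K V A t h where
  sp i := p i
  map a := (X.map a).restrict (hp a)

/-- Inclusion of the subrepresentation. -/
def subInc (X : QuivRep K V A t h) (p : ∀ i, Submodule K (X.sp i))
    (hp : ∀ a, ∀ x ∈ p (t a), X.map a x ∈ p (h a)) : Fam (subRep X p hp) X :=
  fun i => (p i).subtype

/-- The quotient representation by a stable family of subspaces. -/
def quotRep (X : QuivRep K V A t h) (p : ∀ i, Submodule K (X.sp i))
    (hp : ∀ a, ∀ x ∈ p (t a), X.map a x ∈ p (h a)) : QuivRep K V A t h where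
  sp i := X.sp i ⧸ p i
  map a := Submodule.mapQ _ _ (X.map a) (hp a)

/-- The projection to the quotient representation. -/
def quotProj (X : QuivRep K V A t h) (p : ∀ i, Submodule K (X.sp i))
    (hp : ∀ a, ∀ x ∈ p (t a), X.map a x ∈ p (h a)) : Fam X (quotRep X p hp) :=
  fun i => (p i).mkQ

/-- Any morphism has a kernel. -/
theorem exists_ker {X Y : QuivRep K V A t h} (f : Fam X Y) (hf : IsHom f) :
    ∃ (k : QuivRep K V A t h) (i : Fam k X), IsHom i ∧ Inj i ∧
      ∀ v x, f v x = 0 ↔ ∃ y, i v y = x := by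
  have hp : ∀ a, ∀ x ∈ LinearMap.ker (f (t a)), X.map a x ∈ LinearMap.ker (f (h a)) := by
    intro a x hx
    rw [LinearMap.mem_ker] at hx ⊢
    rw [hf a x, hx, map_zero]
  refine ⟨subRep X (fun v => LinearMap.ker (f v)) hp,
    subInc X (fun v => LinearMap.ker (f v)) hp, fun a x => rfl, fun v => Subtype.val_injective, ?_⟩
  intro v x
  constructor
  · intro hx
    exact ⟨⟨x, hx⟩, rfl⟩
  · rintro ⟨y, rfl⟩
    exact y.2

/-- Any morphism has an image factorization. -/
theorem exists_image {X Y : QuivRep K V A t h} (f : Fam X Y) (hf : IsHom f) :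
    ∃ (I : QuivRep K V A t h) (p : Fam X I) (i : Fam I Y), IsHom p ∧ IsHom i ∧ Inj i ∧ Surj p ∧
      ∀ v x, i v (p v x) = f v x := by
  have hp : ∀ a, ∀ x ∈ LinearMap.range (f (t a)), Y.map a x ∈ LinearMap.range (f (h a)) := by
    rintro a _ ⟨x, rfl⟩
    exact ⟨X.map a x, hf a x⟩
  refine ⟨subRep Y (fun v => LinearMap.range (f v)) hp, fun v => (f v).rangeRestrict,
    subInc Y (fun v => LinearMap.range (f v)) hp, ?_, fun a x => rfl,
    fun v => Subtype.val_injective, fun v => (f v).surjective_rangeRestrict, fun v x => rfl⟩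
  intro a x
  apply Subtype.ext
  exact hf a x

/-- Any monomorphism has a cokernel. -/
theorem exists_coker {X Y : QuivRep K V A t h} (f : Fam X Y) (hf : IsHom f) (hi : Inj f) :
    ∃ (C : QuivRep K V A t h) (p : Fam Y C), SES f p := by
  have hp : ∀ a, ∀ x ∈ LinearMap.range (f (t a)), Y.map a x ∈ LinearMap.range (f (h a)) := by
    rintro a _ ⟨x, rfl⟩
    exact ⟨X.map a x, hf a x⟩
  refine ⟨quotRep Y (fun v => LinearMap.range (f v)) hp,
    quotProj Y (fun v => LinearMap.range (f v)) hp, hf, fun a x => rfl, hi,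
    fun v => Submodule.mkQ_surjective _, ?_, ?_⟩
  · intro v x
    exact (Submodule.Quotient.mk_eq_zero _).mpr ⟨x, rfl⟩
  · intro v y hy
    exact (Submodule.Quotient.mk_eq_zero _).mp hy

/-- Factoring a morphism through a monomorphism. -/
theorem factor_inj {X Y Z : QuivRep K V A t h} (i : Fam Y Z) (hi : IsHom i) (hinj : Inj i)
    (f : Fam X Z) (hf : IsHom f) (hr : ∀ v x, ∃ y, i v y = f v x) :
    ∃ g : Fam X Y, IsHom g ∧ ∀ v x, i v (g v x) = f v x := by
  choose r hrr using fun v => (i v).exists_leftInverse_of_injective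
      (LinearMap.ker_eq_bot.mpr (hinj v))
  have hr' : ∀ v x, r v (i v x) = x := fun v x => LinearMap.congr_fun (hrr v) x
  have key : ∀ v x, i v (r v (f v x)) = f v x := by
    intro v x
    obtain ⟨y, hy⟩ := hr v x
    rw [← hy, hr']
  refine ⟨fun v => (r v).comp (f v), ?_, key⟩
  intro a x
  apply hinj
  rw [LinearMap.comp_apply, LinearMap.comp_apply, key, hi, key, hf a x]

/-- Factoring a morphism through an epimorphism. -/
theorem factor_surj {X Y Z : QuivRep K V A t h} (p : Fam X Y) (hp : IsHom p) (hs : Surj p)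
    (f : Fam X Z) (hf : IsHom f) (hr : ∀ v x, p v x = 0 → f v x = 0) :
    ∃ g : Fam Y Z, IsHom g ∧ ∀ v x, g v (p v x) = f v x := by
  choose s hss using fun v => (p v).exists_rightInverse_of_surjective
      (LinearMap.range_eq_top.mpr (hs v))
  have hs' : ∀ v x, p v (s v x) = x := fun v x => LinearMap.congr_fun (hss v) x
  have key : ∀ v x, f v (s v (p v x)) = f v x := by
    intro v x
    have := hr v (s v (p v x) - x) (by simp [hs'])
    rw [map_sub, sub_eq_zero] at this
    exact this
  refine ⟨fun v => (f v).comp (s v), ?_, key⟩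
  intro a y
  obtain ⟨x, rfl⟩ := hs _ y
  rw [← hp a x, LinearMap.comp_apply, LinearMap.comp_apply, key, key, hf a x]

end QuivRep

end Helpers

section Helpers

set_option linter.unusedSectionVars false

variable {K} {t h : A → V}

theorem natZ_add (x y : V → ℕ) : natZ (x + y) = natZ x + natZ y := by
  funext i; simp [natZ]

theorem eulerForm_add_left {R : Type} [CommRing R] (x y z : V → R) :
    eulerForm t h (x + y) z = eulerForm t h x z + eulerForm t h y z := by
  simp only [eulerForm, Pi.add_apply, add_mul, Finset.sum_add_distrib]; ring

theorem eulerForm_add_right {R : Type} [CommRing R] (x y z : V → R) :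
    eulerForm t h z (x + y) = eulerForm t h z x + eulerForm t h z y := by
  simp only [eulerForm, Pi.add_apply, mul_add, Finset.sum_add_distrib]; ring

theorem eulerForm_smul_left {R : Type} [CommRing R] (c : R) (x z : V → R) :
    eulerForm t h (c • x) z = c * eulerForm t h x z := by
  simp only [eulerForm, Pi.smul_apply, smul_eq_mul, mul_sub, Finset.mul_sum, mul_assoc]

theorem eulerForm_smul_right {R : Type} [CommRing R] (c : R) (x z : V → R) :
    eulerForm t h z (c • x) = c * eulerForm t h z x := by
  simp only [eulerForm, Pi.smul_apply, smul_eq_mul, mul_sub, Finset.mul_sum, mul_left_comm]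

theorem eulerForm_sum_left {R ι : Type} [CommRing R] (s : Finset ι) (x : ι → V → R) (z : V → R) :
    eulerForm t h (∑ i ∈ s, x i) z = ∑ i ∈ s, eulerForm t h (x i) z := by
  classical
  induction s using Finset.induction_on with
  | empty => simp [eulerForm]
  | insert a s ha ih => rw [Finset.sum_insert ha, Finset.sum_insert ha, eulerForm_add_left, ih]

theorem eulerForm_sum_right {R ι : Type} [CommRing R] (s : Finset ι) (x : ι → V → R) (z : V → R) :
    eulerForm t h z (∑ i ∈ s, x i) = ∑ i ∈ s, eulerForm t h z (x i) := by
  classical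
  induction s using Finset.induction_on with
  | empty => simp [eulerForm]
  | insert a s ha ih => rw [Finset.sum_insert ha, Finset.sum_insert ha, eulerForm_add_right, ih]

namespace QuivRep

/-- In an exceptional pair `(Y, X)` with `⟨X, Y⟩ ≤ 0`, there are no maps from `X` to `Y`. -/
theorem hom_orth {X Y : QuivRep K V A t h} (hX : X.IsExceptional) (hY : Y.IsExceptional)
    (h0 : homDim Y X = 0) (e0 : extDim Y X = 0)
    (hle : eulerForm t h (natZ X.dimVec) (natZ Y.dimVec) ≤ 0) : homDim X Y = 0 := by
  by_contra hne
  have hpos : 0 < homDim X Y := Nat.pos_of_ne_zero hne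
  have hE := euler_eq X Y
  have hext : extDim X Y ≠ 0 := by
    intro h1
    rw [← hE, h1] at hle
    push_cast at hle
    omega
  obtain ⟨f, hf, hf0⟩ := (homDim_pos_iff X Y).mp hpos
  have hXX : extDim X X = 0 := hX.1
  have hYY : extDim Y Y = 0 := hY.1
  have hninj : ¬ Inj f := by
    intro hi
    have := extDim_le_of_inj Y f hf hi
    omega
  have hnsurj : ¬ Surj f := by
    intro hi
    have := extDim_le_of_surj X f hf hi
    omega
  obtain ⟨I, p, i, hp, hi, hinj, hsurj, hfac⟩ := exists_image f hf
  obtain ⟨k, j, hj, hjinj, hker⟩ := exists_ker p hp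
  obtain ⟨C, q, hq⟩ := exists_coker i hi hinj
  have S1 : SES j p := ⟨hj, hp, hjinj, hsurj, fun v x => (hker v _).mpr ⟨x, rfl⟩,
    fun v y hy => (hker v y).mp hy⟩
  have hYI : homDim Y I = 0 := by
    rw [homDim_eq_zero_iff]
    intro g hg
    obtain ⟨c, hc⟩ := schur_scalar hY.2 (cmp i g) (hi.comp hg)
    have hc' : ∀ v x, i v (g v x) = c • x := fun v x => by
      have := LinearMap.congr_fun (congrFun hc v) x
      simpa using this
    by_cases hc0 : c = 0
    · apply fam_ext
      intro v x
      apply hinj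
      rw [hc', hc0]
      simp
    · exfalso
      apply hnsurj
      intro v y
      obtain ⟨x, hx⟩ := hsurj v (g v (c⁻¹ • y))
      refine ⟨x, ?_⟩
      rw [← hfac, hx, hc', smul_inv_smul₀ hc0]
  have hIX : homDim I X = 0 := by
    rw [homDim_eq_zero_iff]
    intro g hg
    obtain ⟨c, hc⟩ := schur_scalar hX.2 (cmp g p) (hg.comp hp)
    have hc' : ∀ v x, g v (p v x) = c • x := fun v x => by
      have := LinearMap.congr_fun (congrFun hc v) x
      simpa using this
    by_cases hc0 : c = 0
    · apply fam_ext
      intro v x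
      obtain ⟨x, rfl⟩ := hsurj v x
      rw [hc', hc0]
      simp
    · exfalso
      apply hninj
      apply inj_of_ker
      intro v x hx
      rw [← hfac] at hx
      have h1 : p v x = 0 := hinj v (by rw [hx, map_zero])
      have h2 := hc' v x
      rw [h1, map_zero] at h2
      exact (smul_eq_zero.mp h2.symm).resolve_left hc0
  have eYI : extDim Y I = 0 := by
    have := extDim_le_of_surj Y p hp hsurj
    omega
  have eIX : extDim I X = 0 := by
    have := extDim_le_of_inj X i hi hinj
    omega
  have eII : extDim I I = 0 := by
    have := extDim_le_of_surj I p hp hsurj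
    omega
  have hII : 0 < homDim I I := by
    rw [homDim_pos_iff]
    refine ⟨idf I, isHom_id I, ?_⟩
    intro h1
    obtain ⟨v, x, hx⟩ := fam_ne_zero hf0
    apply hx
    rw [← hfac]
    have : idf I v (p v x) = 0 := by rw [h1]; simp
    rw [idf_apply] at this
    rw [this, map_zero]
  have hCk : 0 < homDim C k := by
    have d1 := S1.dim
    have d2 := hq.dim
    have a1 := euler_eq C k
    have a2 := euler_eq Y X
    have a3 := euler_eq Y I
    have a4 := euler_eq I X
    have a5 := euler_eq I I
    rw [d1, d2] at a2
    rw [d2] at a3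
    rw [d1] at a4
    simp only [natZ_add, eulerForm_add_left, eulerForm_add_right] at a1 a2 a3 a4 a5
    simp only [h0, e0, hYI, eYI, hIX, eIX, eII] at a2 a3 a4 a5
    push_cast at *
    omega
  obtain ⟨g, hg, hg0⟩ := (homDim_pos_iff C k).mp hCk
  have := (homDim_eq_zero_iff Y X).mp h0 (cmp j (cmp g q)) (hj.comp (hg.comp hq.hp))
  apply hg0
  apply fam_ext
  intro v x
  obtain ⟨y, rfl⟩ := hq.surj v x
  apply hjinj
  have h3 := LinearMap.congr_fun (congrFun this v) y
  simpa using h3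

/-! ### The category filtered by a family of orthogonal bricks -/

variable {l : ℕ}

/-- Representations filtered by the family `E`. -/
inductive Filt (E : Fin l → QuivRep K V A t h) : QuivRep K V A t h → Prop
  | zero (X : QuivRep K V A t h) (hX : ∀ v (x : X.sp v), x = 0) : Filt E X
  | ext (X X' : QuivRep K V A t h) (j : Fin l) (i : Fam (E j) X) (p : Fam X X')
      (S : SES i p) (hX' : Filt E X') : Filt E X

/-- Extension closure of `Filt`. -/
theorem Filt.extension {E : Fin l → QuivRep K V A t h} {Z : QuivRep K V A t h} (hZ : Filt E Z)
    {X : QuivRep K V A t h} (hX : Filt E X) :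
    ∀ {Y : QuivRep K V A t h} {i : Fam X Y} {p : Fam Y Z}, SES i p → Filt E Y := by
  induction hX with
  | zero X hX =>
    intro Y i p S
    have hpi : Inj p := inj_of_ker fun v y hy => by
      obtain ⟨x, rfl⟩ := S.exact v y hy
      rw [hX v x, map_zero]
    cases hZ with
    | zero _ hZ =>
      refine Filt.zero _ fun v y => hpi v ?_
      rw [hZ v (p v y), map_zero]
    | ext _ Z' j i' p' S' hZ' =>
      obtain ⟨g, hg, hg'⟩ := factor_inj p S.hp hpi i' S'.hi (fun v x => S.surj v _)
      refine Filt.ext _ Z' j g (cmp p' p) ⟨hg, S'.hp.comp S.hp, ?_, ?_, ?_, ?_⟩ hZ'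
      · apply inj_of_ker
        intro v x hx
        apply S'.inj v
        rw [← hg', hx]; simp
      · intro v
        exact (S'.surj v).comp (S.surj v)
      · intro v x
        rw [cmp_apply, hg', S'.zero]
      · intro v y hy
        obtain ⟨x, hx⟩ := S'.exact v _ hy
        refine ⟨x, hpi v ?_⟩
        rw [hg', hx]
  | ext X X' j i0 p0 S0 hX' ih =>
    intro Y i p S
    obtain ⟨Y', q, Sq⟩ := exists_coker (cmp i i0) (S.hi.comp S0.hi)
      (fun v => (S.inj v).comp (S0.inj v))
    obtain ⟨i', hi', hii⟩ := factor_surj p0 S0.hp S0.surj (cmp q i) (Sq.hp.comp S.hi) (by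
      intro v x hx
      obtain ⟨e, rfl⟩ := S0.exact v x hx
      exact Sq.zero v e)
    obtain ⟨p', hp', hpp⟩ := factor_surj q Sq.hp Sq.surj p S.hp (by
      intro v x hx
      obtain ⟨e, rfl⟩ := Sq.exact v x hx
      exact S.zero v _)
    refine Filt.ext _ Y' j _ q Sq (ih (i := i') (p := p') ⟨hi', hp', ?_, ?_, ?_, ?_⟩)
    · apply inj_of_ker
      intro v x hx
      obtain ⟨x, rfl⟩ := S0.surj v x
      rw [hii] at hx
      obtain ⟨e, he⟩ := Sq.exact v _ hx
      have := S.inj v he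
      rw [← this, S0.zero]
    · intro v z
      obtain ⟨y, rfl⟩ := S.surj v z
      exact ⟨q v y, hpp v y⟩
    · intro v x
      obtain ⟨x, rfl⟩ := S0.surj v x
      rw [hii, cmp_apply, hpp, S.zero]
    · intro v y hy
      obtain ⟨y, rfl⟩ := Sq.surj v y
      rw [hpp] at hy
      obtain ⟨x, rfl⟩ := S.exact v y hy
      exact ⟨p0 v x, hii v x⟩

/-- A family of pairwise orthogonal bricks. -/
def Orth (E : Fin l → QuivRep K V A t h) : Prop :=
  (∀ j, IsSchur (E j)) ∧ ∀ i j, i ≠ j → homDim (E i) (E j) = 0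

/-- Cokernels of maps from simple objects. -/
theorem Filt.coker_simple {E : Fin l → QuivRep K V A t h} (hE : Orth E)
    {Y : QuivRep K V A t h} (hY : Filt E Y) :
    ∀ {j : Fin l} {f : Fam (E j) Y}, IsHom f → f ≠ 0 →
      ∃ (C : QuivRep K V A t h) (q : Fam Y C), SES f q ∧ Filt E C := by
  induction hY with
  | zero X hX =>
    intro j f hf hne
    exact absurd (fam_ext fun v x => by rw [hX v (f v x)]; simp) hne
  | ext X X' m i p S hX' ih =>
    intro j f hf hne
    by_cases h0 : cmp p f = 0
    · have h0' : ∀ v x, p v (f v x) = 0 := fun v x => by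
        have := LinearMap.congr_fun (congrFun h0 v) x
        simpa using this
      obtain ⟨g, hg, hg'⟩ := factor_inj i S.hi S.inj f hf (fun v x => S.exact v _ (h0' v x))
      have hgne : g ≠ 0 := by
        rintro rfl
        apply hne
        apply fam_ext
        intro v x
        rw [← hg']
        simp
      have hjm : j = m := by
        by_contra hjm
        exact hgne ((homDim_eq_zero_iff _ _).mp (hE.2 j m hjm) g hg)
      subst hjm
      obtain ⟨c, rfl⟩ := schur_scalar (hE.1 j) g hg
      have hc : c ≠ 0 := by
        rintro rfl
        exact hgne (by simp)
      have hfi : ∀ v x, f v x = c • i v x := fun v x => by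
        rw [← hg' v x]; simp
      refine ⟨X', p, ⟨hf, S.hp, ?_, S.surj, h0', ?_⟩, hX'⟩
      · apply inj_of_ker
        intro v x hx
        rw [hfi] at hx
        exact S.inj v (by simpa using (smul_eq_zero.mp hx).resolve_left hc)
      · intro v y hy
        obtain ⟨x, rfl⟩ := S.exact v y hy
        exact ⟨c⁻¹ • x, by rw [hfi, map_smul, smul_inv_smul₀ hc]⟩
    · obtain ⟨C', q', S', hC'⟩ := ih (S.hp.comp hf) h0
      have hfinj : Inj f := by
        apply inj_of_ker
        intro v x hx
        apply S'.inj v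
        rw [cmp_apply, hx]; simp
      obtain ⟨C, q, Sq⟩ := exists_coker f hf hfinj
      obtain ⟨r, hr, hr'⟩ := factor_surj q Sq.hp Sq.surj (cmp q' p) (S'.hp.comp S.hp) (by
        intro v x hx
        obtain ⟨e, rfl⟩ := Sq.exact v x hx
        exact S'.zero v e)
      refine ⟨C, q, Sq, Filt.ext C C' m (cmp q i) r ⟨Sq.hp.comp S.hi, hr, ?_, ?_, ?_, ?_⟩ hC'⟩
      · apply inj_of_ker
        intro v x hx
        obtain ⟨e, he⟩ := Sq.exact v _ hx
        have h1 : cmp p f v e = 0 := by rw [cmp_apply, he, S.zero]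
        have h2 : e = 0 := S'.inj v (by rw [h1, map_zero])
        rw [h2, map_zero] at he
        exact S.inj v (by rw [← he, map_zero])
      · intro v y
        obtain ⟨x', rfl⟩ := S'.surj v y
        obtain ⟨x, rfl⟩ := S.surj v x'
        exact ⟨q v x, hr' v x⟩
      · intro v x
        rw [cmp_apply, hr', cmp_apply, S.zero, map_zero]
      · intro v y hy
        obtain ⟨x, rfl⟩ := Sq.surj v y
        rw [hr', cmp_apply] at hy
        obtain ⟨e, he⟩ := S'.exact v _ hy
        obtain ⟨z, hz⟩ := S.exact v (x - f v e) (by rw [map_sub, ← he]; simp)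
        refine ⟨z, ?_⟩
        rw [cmp_apply, hz, map_sub, Sq.zero, sub_zero]

/-- Kernels of maps in the filtered category. -/
theorem Filt.kernel {E : Fin l → QuivRep K V A t h} (hE : Orth E)
    {X : QuivRep K V A t h} (hX : Filt E X) :
    ∀ {Y k : QuivRep K V A t h} {f : Fam X Y} {i : Fam k X}, Filt E Y → IsHom f → IsHom i →
      Inj i → (∀ v x, f v x = 0 ↔ ∃ y, i v y = x) → Filt E k := by
  induction hX with
  | zero X hX =>
    intro Y k f i _ _ _ hinj _
    exact Filt.zero _ fun v x => hinj v (by rw [hX v (i v x), map_zero])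
  | ext X X' m ι p S hX' ih =>
    intro Y k f i hY hf hi hinj hker
    by_cases h0 : cmp f ι = 0
    · have h0' : ∀ v x, f v (ι v x) = 0 := fun v x => by
        have := LinearMap.congr_fun (congrFun h0 v) x
        simpa using this
      obtain ⟨f', hf', hff⟩ := factor_surj p S.hp S.surj f hf (by
        intro v x hx
        obtain ⟨e, rfl⟩ := S.exact v x hx
        exact h0' v e)
      obtain ⟨k', i', hi', hinj', hker'⟩ := exists_ker f' hf'
      have hk' := ih hY hf' hi' hinj' hker'
      obtain ⟨u, hu, hu'⟩ := factor_inj i hi hinj ι S.hi (fun v x => (hker v _).mp (h0' v x))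
      obtain ⟨r, hr, hr'⟩ := factor_inj i' hi' hinj' (cmp p i) (S.hp.comp hi) (fun v x =>
        (hker' v _).mp (by rw [cmp_apply, hff]; exact (hker v _).mpr ⟨x, rfl⟩))
      refine Filt.ext k k' m u r ⟨hu, hr, ?_, ?_, ?_, ?_⟩ hk'
      · apply inj_of_ker
        intro v x hx
        apply S.inj v
        rw [← hu', hx]; simp
      · intro v y
        obtain ⟨x, hx⟩ := S.surj v (i' v y)
        have h1 : f v x = 0 := by
          rw [← hff, hx]
          exact (hker' v _).mpr ⟨y, rfl⟩
        obtain ⟨z, rfl⟩ := (hker v x).mp h1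
        refine ⟨z, hinj' v ?_⟩
        rw [hr', cmp_apply, hx]
      · intro v x
        apply hinj' v
        rw [hr', cmp_apply, hu', S.zero, map_zero]
      · intro v y hy
        have h1 : p v (i v y) = 0 := by
          have := hr' v y
          rw [hy, map_zero] at this
          exact this.symm
        obtain ⟨x, hx⟩ := S.exact v _ h1
        exact ⟨x, hinj v (by rw [hu', hx])⟩
    · obtain ⟨C, q, Sq, hC⟩ := hY.coker_simple hE (hf.comp S.hi) h0
      obtain ⟨f', hf', hff⟩ := factor_surj p S.hp S.surj (cmp q f) (Sq.hp.comp hf) (by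
        intro v x hx
        obtain ⟨e, rfl⟩ := S.exact v x hx
        exact Sq.zero v e)
      refine ih (f := f') (i := cmp p i) hC hf' (S.hp.comp hi) ?_ ?_
      · apply inj_of_ker
        intro v x hx
        obtain ⟨e, he⟩ := S.exact v _ hx
        have h1 : cmp f ι v e = 0 := by
          rw [cmp_apply, he]
          exact (hker v _).mpr ⟨x, rfl⟩
        have h2 : e = 0 := Sq.inj v (by rw [h1, map_zero])
        rw [h2, map_zero] at he
        exact hinj v (by rw [← he, map_zero])
      · intro v x'
        obtain ⟨x, rfl⟩ := S.surj v x'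
        rw [hff, cmp_apply]
        constructor
        · intro hx
          obtain ⟨e, he⟩ := Sq.exact v _ hx
          obtain ⟨y, hy⟩ := (hker v (x - ι v e)).mp (by rw [map_sub, ← he]; simp)
          refine ⟨y, ?_⟩
          rw [cmp_apply, hy, map_sub, S.zero, sub_zero]
        · rintro ⟨y, hy⟩
          rw [cmp_apply] at hy
          obtain ⟨e, he⟩ := S.exact v (i v y - x) (by rw [map_sub, hy, sub_self])
          have h1 : f v (i v y) = 0 := (hker v _).mpr ⟨y, rfl⟩
          have h2 : f v x = - cmp f ι v e := by
            rw [cmp_apply, he, map_sub, h1]; simp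
          rw [h2, map_neg, Sq.zero, neg_zero]

/-- Dimension vectors of filtered objects. -/
theorem Filt.dimVec {E : Fin l → QuivRep K V A t h} {X : QuivRep K V A t h} (hX : Filt E X) :
    ∃ n : Fin l → ℕ, X.dimVec = ∑ j, n j • (E j).dimVec := by
  induction hX with
  | zero X hX =>
    refine ⟨0, ?_⟩
    funext v
    have : Subsingleton (X.sp v) := ⟨fun x y => by rw [hX v x, hX v y]⟩
    simpa [QuivRep.dimVec] using Module.finrank_zero_of_subsingleton (R := K) (M := X.sp v)
  | ext X X' m i p S hX' ih =>
    obtain ⟨n, hn⟩ := ih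
    refine ⟨n + Pi.single m 1, ?_⟩
    rw [S.dim, hn]
    simp only [Pi.add_apply, add_smul, Finset.sum_add_distrib]
    rw [add_comm]
    congr 1
    rw [Finset.sum_eq_single m]
    · simp
    · intro j _ hj
      simp [Pi.single_eq_of_ne hj]
    · simp

/-- The simple objects are filtered. -/
theorem Filt.simple (E : Fin l → QuivRep K V A t h) (j : Fin l) : Filt E (E j) := by
  obtain ⟨C, q, S⟩ := exists_coker (idf (E j)) (isHom_id _) (fun v x y hxy => hxy)
  refine Filt.ext _ C j _ q S (Filt.zero _ ?_)
  intro v x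
  obtain ⟨y, rfl⟩ := S.surj v x
  exact S.zero v y

end QuivRep

end Helpers

section Helpers

set_option linter.unusedSectionVars false

variable {K} {t h : A → V}

/-- A finite-dimensional reduced algebra over an algebraically closed field with only trivial
idempotents consists of scalars. -/
theorem alg_scalar [IsAlgClosed K] {R : Type} [Ring R] [Algebra K R] [FiniteDimensional K R]
    [Nontrivial R] (hid : ∀ e : R, e * e = e → e = 0 ∨ e = 1) (hsq : ∀ x : R, x * x = 0 → x = 0)
    (a : R) : ∃ c : K, a = algebraMap K R c := by
  have hIntegral : IsIntegral K a := Algebra.IsIntegral.isIntegral a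
  have hm0 : minpoly K a ≠ 0 := minpoly.ne_zero hIntegral
  obtain ⟨c, hc⟩ := IsAlgClosed.exists_root (minpoly K a) (minpoly.degree_pos hIntegral).ne'
  obtain ⟨g, hg, hndvd⟩ := Polynomial.exists_eq_pow_rootMultiplicity_mul_and_not_dvd
    (minpoly K a) hm0 c
  have hk : 0 < Polynomial.rootMultiplicity c (minpoly K a) :=
    (Polynomial.rootMultiplicity_pos hm0).mpr hc
  set k := Polynomial.rootMultiplicity c (minpoly K a) with hkdef
  have hcop : IsCoprime ((Polynomial.X - Polynomial.C c) ^ k) g := by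
    apply IsCoprime.pow_left
    exact ((Polynomial.irreducible_X_sub_C c).coprime_iff_not_dvd).mpr hndvd
  obtain ⟨u, v, huv⟩ := hcop
  have hma : Polynomial.aeval a ((Polynomial.X - Polynomial.C c) ^ k * g) = 0 := by
    rw [← hg]; exact minpoly.aeval K a
  have hred : IsReduced R := (isReduced_iff_pow_one_lt 2 (by norm_num)).mpr
    (fun x hx => hsq x (by rw [← pow_two]; exact hx))
  have he := hid (Polynomial.aeval a (v * g)) (by
    have h1 : v * g = v * g * (v * g) + (u * v) * ((Polynomial.X - Polynomial.C c) ^ k * g) := by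
      calc v * g = v * g * 1 := by ring
        _ = v * g * (v * g) + (u * v) * ((Polynomial.X - Polynomial.C c) ^ k * g) := by
          rw [← huv]; ring
    have h2 := congrArg (Polynomial.aeval a) h1
    rw [map_add, map_mul _ (u * v), hma, mul_zero, add_zero, map_mul _ (v * g)] at h2
    exact h2.symm)
  rcases he with he | he
  · exfalso
    have h1 : g = u * ((Polynomial.X - Polynomial.C c) ^ k * g) + g * (v * g) := by
      calc g = 1 * g := by ring
        _ = _ := by rw [← huv]; ring
    have h2 := congrArg (Polynomial.aeval a) h1
    rw [map_add, map_mul _ u, hma, mul_zero, zero_add, map_mul _ g, he, mul_zero] at h2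
    have h3 := minpoly.dvd K a h2
    apply hndvd
    refine dvd_trans (dvd_trans ?_ h3) (dvd_refl g)
    rw [hg]
    exact dvd_mul_of_dvd_left (dvd_pow_self _ hk.ne') _
  · have h1 : (Polynomial.X - Polynomial.C c) ^ k =
        (Polynomial.X - Polynomial.C c) ^ k * (u * (Polynomial.X - Polynomial.C c) ^ k) +
        v * ((Polynomial.X - Polynomial.C c) ^ k * g) := by
      calc (Polynomial.X - Polynomial.C c) ^ k = (Polynomial.X - Polynomial.C c) ^ k * 1 := by ring
        _ = _ := by rw [← huv]; ring
    have h0 : Polynomial.aeval a (u * (Polynomial.X - Polynomial.C c) ^ k) = 0 := by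
      have := congrArg (Polynomial.aeval a) huv
      rw [map_add, he, map_one] at this
      simpa using this
    have h2 := congrArg (Polynomial.aeval a) h1
    rw [map_add, map_mul _ v, hma, mul_zero, add_zero, map_mul _ _ (u * _), h0, mul_zero,
      map_pow] at h2
    have h3 := hred.eq_zero _ ⟨k, h2⟩
    refine ⟨c, ?_⟩
    rw [map_sub, Polynomial.aeval_X, Polynomial.aeval_C, sub_eq_zero] at h3
    exact h3

namespace QuivRep

/-- Total dimension. -/
def tdim (X : QuivRep K V A t h) : ℕ := ∑ v, X.dimVec v

/-- Indecomposable representations. -/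
def Indec (X : QuivRep K V A t h) : Prop :=
  (∃ v, ∃ x : X.sp v, x ≠ 0) ∧ ∀ e : Fam X X, IsHom e → cmp e e = e → e = 0 ∨ e = idf X

/-- The endomorphism algebra. -/
def endAlg (X : QuivRep K V A t h) : Subalgebra K (∀ i, Module.End K (X.sp i)) where
  carrier := {f | IsHom (X := X) (Y := X) f}
  mul_mem' := fun {f g} hf hg => IsHom.comp (g := f) (f := g) hf hg
  add_mem' := fun {f g} hf hg => IsHom.add (g := f) (f := g) hf hg
  algebraMap_mem' := fun c a x => by
    simp [Module.algebraMap_end_apply]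

theorem Indec.schur_or [IsAlgClosed K] {X : QuivRep K V A t h} (hX : Indec X) :
    IsSchur X ∨ ∃ f : Fam X X, IsHom f ∧ f ≠ 0 ∧ cmp f f = 0 := by
  by_contra hcon
  push Not at hcon
  obtain ⟨hns, hsq⟩ := hcon
  apply hns
  obtain ⟨v, x, hx⟩ := hX.1
  have hid0 : idf X ≠ 0 := by
    intro h0
    apply hx
    have := LinearMap.congr_fun (congrFun h0 v) x
    simpa using this
  have hnt : Nontrivial (endAlg X) := by
    refine ⟨0, 1, fun h01 => hid0 ?_⟩
    exact (congrArg Subtype.val h01).symm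
  have key := alg_scalar (K := K) (R := endAlg X) (by
      intro e he
      rcases hX.2 e.1 e.2 (congrArg Subtype.val he) with h1 | h1
      · left; exact Subtype.ext h1
      · right; exact Subtype.ext h1) (by
      intro e he
      by_contra hne
      exact hsq e.1 e.2 (fun h0 => hne (Subtype.ext h0)) (congrArg Subtype.val he))
  unfold IsSchur homDim
  have hne : (⟨idf X, (mem_homS _).mpr (isHom_id X)⟩ : homS X X) ≠ 0 := by
    intro h0
    exact hid0 (congrArg Subtype.val h0)
  rw [finrank_eq_one_iff_of_nonzero' _ hne]
  rintro ⟨f, hf⟩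
  obtain ⟨c, hc⟩ := key ⟨f, (mem_homS f).mp hf⟩
  refine ⟨c, Subtype.ext ?_⟩
  have hc' : f = algebraMap K (∀ i, Module.End K (X.sp i)) c := congrArg Subtype.val hc
  change c • idf X = f
  rw [hc']
  apply fam_ext (X := X) (Y := X)
  intro i x
  simp [Module.algebraMap_end_apply]

theorem tdim_le_of_inj {X Y : QuivRep K V A t h} (f : Fam X Y) (hf : Inj f) :
    tdim X ≤ tdim Y :=
  Finset.sum_le_sum fun v _ => LinearMap.finrank_le_finrank_of_injective (hf v)

theorem surj_of_tdim {X Y : QuivRep K V A t h} (f : Fam X Y) (hf : Inj f)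
    (hd : tdim Y ≤ tdim X) : Surj f := by
  have hle : ∀ v, X.dimVec v ≤ Y.dimVec v := fun v =>
    LinearMap.finrank_le_finrank_of_injective (hf v)
  have heq := (Finset.sum_eq_sum_iff_of_le (fun v (_ : v ∈ Finset.univ) => hle v)).mp
    (le_antisymm (Finset.sum_le_sum fun v _ => hle v) hd)
  intro v
  exact (LinearMap.injective_iff_surjective_of_finrank_eq_finrank
    (heq v (Finset.mem_univ v))).mp (hf v)

theorem inj_of_tdim {X Y : QuivRep K V A t h} (f : Fam X Y) (hf : Surj f)
    (hd : tdim X ≤ tdim Y) : Inj f := by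
  have hle : ∀ v, Y.dimVec v ≤ X.dimVec v := fun v =>
    LinearMap.finrank_le_finrank_of_surjective (hf v)
  have heq := (Finset.sum_eq_sum_iff_of_le (fun v (_ : v ∈ Finset.univ) => hle v)).mp
    (le_antisymm (Finset.sum_le_sum fun v _ => hle v) hd)
  intro v
  exact (LinearMap.injective_iff_surjective_of_finrank_eq_finrank
    (heq v (Finset.mem_univ v)).symm).mpr (hf v)

/-- Splitting an idempotent `e`: the image of `e`, as a filtered retract. -/
theorem split_idem {l : ℕ} {E : Fin l → QuivRep K V A t h} (hE : Orth E)
    {X : QuivRep K V A t h} (hX : Filt E X) (e : Fam X X) (he : IsHom e) (hee : cmp e e = e) :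
    ∃ (Z : QuivRep K V A t h) (i : Fam Z X) (p : Fam X Z), Filt E Z ∧ IsHom i ∧ IsHom p ∧
      (∀ v z, p v (i v z) = z) ∧ (∀ v x, i v (p v x) = e v x) ∧
      (e ≠ idf X → tdim Z < tdim X) := by
  have hee' : ∀ v x, e v (e v x) = e v x := fun v x => LinearMap.congr_fun (congrFun hee v) x
  obtain ⟨Z, i, hi, hinj, hker⟩ := exists_ker (idf X - e) ((isHom_id X).sub he)
  have hFZ : Filt E Z := hX.kernel hE hX ((isHom_id X).sub he) hi hinj hker
  obtain ⟨p, hp, hp'⟩ := factor_inj i hi hinj e he (fun v x => (hker v _).mp (by simp [hee']))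
  have hez : ∀ v z, e v (i v z) = i v z := fun v z => by
    have := (hker v (i v z)).mpr ⟨z, rfl⟩
    simp only [Pi.sub_apply, LinearMap.sub_apply, idf_apply] at this
    exact (sub_eq_zero.mp this).symm
  refine ⟨Z, i, p, hFZ, hi, hp, ?_, hp', ?_⟩
  · intro v z
    apply hinj v
    rw [hp', hez]
  · intro hne
    by_contra hlt
    push Not at hlt
    have hs := surj_of_tdim i hinj hlt
    apply hne
    apply fam_ext
    intro v x
    obtain ⟨z, rfl⟩ := hs v x
    rw [hez, idf_apply]

/-- If the Euler form is positive on the filtered category, every indecomposable object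
of it is exceptional. -/
theorem indec_exceptional [IsAlgClosed K] {l : ℕ} {E : Fin l → QuivRep K V A t h} (hE : Orth E)
    (hpos : ∀ X, Filt E X → (∃ v, ∃ x : X.sp v, x ≠ 0) →
      0 < eulerForm t h (natZ X.dimVec) (natZ X.dimVec)) :
    ∀ (d : ℕ) (M : QuivRep K V A t h), tdim M = d → Filt E M → Indec M → IsExceptional M := by
  intro d
  induction d using Nat.strong_induction_on with
  | _ d IH =>
  intro M hMd hM hind
  have hschur : IsSchur M := by
    rcases hind.schur_or with hs | hex
    · exact hs
    exfalso
    -- a square-zero endomorphism of minimal rank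
    let rk : Fam M M → ℕ := fun f => ∑ v, Module.finrank K (LinearMap.range (f v))
    obtain ⟨φ, ⟨hφ, hφ0, hφφ⟩, hmin⟩ := exists_minimalFor_of_wellFoundedLT
      (fun f : Fam M M => IsHom f ∧ f ≠ 0 ∧ cmp f f = 0) rk hex
    have hφφ' : ∀ v x, φ v (φ v x) = 0 := fun v x => by
      have := LinearMap.congr_fun (congrFun hφφ v) x
      simpa using this
    obtain ⟨I, p, i, hp, hi, hinj, hsurj, hfac⟩ := exists_image φ hφ
    obtain ⟨k, ι, hι, hιinj, hker⟩ := exists_ker p hp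
    have hker2 : ∀ v x, φ v x = 0 ↔ ∃ y, ι v y = x := by
      intro v x
      rw [← hker, ← hfac]
      constructor
      · intro h0; exact hinj v (by rw [h0, map_zero])
      · intro h0; rw [h0, map_zero]
    have S : SES ι p := ⟨hι, hp, hιinj, hsurj, fun v x => (hker v _).mpr ⟨x, rfl⟩,
      fun v y hy => (hker v y).mp hy⟩
    have hk : Filt E k := hM.kernel hE hM hφ hι hιinj hker2
    obtain ⟨j, hj, hj'⟩ := factor_inj ι hι hιinj i hi (by
      intro v x
      obtain ⟨y, rfl⟩ := hsurj v x
      rw [hfac]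
      exact (hker2 v _).mp (hφφ' v y))
    have hjne : j ≠ 0 := by
      rintro rfl
      apply hφ0
      apply fam_ext
      intro v x
      rw [← hfac, ← hj']
      simp
    have hktd : tdim k < tdim M := by
      by_contra hlt
      push Not at hlt
      have hs := surj_of_tdim ι hιinj hlt
      apply hφ0
      apply fam_ext
      intro v x
      rw [(hker2 v x).mpr (hs v x)]
      simp
    -- a minimal summand of the kernel
    let Good : ℕ → Prop := fun n => ∃ (Z : QuivRep K V A t h) (a : Fam Z k) (π : Fam k Z),
      tdim Z = n ∧ Filt E Z ∧ IsHom a ∧ IsHom π ∧ (∀ v z, π v (a v z) = z) ∧ cmp π j ≠ 0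
    have hGood : ∃ n, Good n := ⟨tdim k, k, idf k, idf k, rfl, hk, isHom_id k, isHom_id k,
      fun _ _ => rfl, hjne⟩
    classical
    obtain ⟨Z, a, π, hZn, hFZ, ha, hπ, hπa, hπj⟩ := Nat.find_spec hGood
    have hZmin : ∀ m, m < tdim Z → ¬ Good m := fun m hm => Nat.find_min hGood (hZn ▸ hm)
    have hainj : Inj a := fun v x y hxy => by rw [← hπa v x, hxy, hπa]
    have hZne : ∃ v, ∃ z : Z.sp v, z ≠ 0 := by
      obtain ⟨v, x, hx⟩ := fam_ne_zero hπj
      exact ⟨v, _, hx⟩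
    have hZind : Indec Z := by
      refine ⟨hZne, ?_⟩
      intro e he hee
      by_contra hcon
      push Not at hcon
      obtain ⟨he0, he1⟩ := hcon
      have hee' : ∀ v x, e v (e v x) = e v x := fun v x =>
        LinearMap.congr_fun (congrFun hee v) x
      have claim : ∀ e' : Fam Z Z, IsHom e' → cmp e' e' = e' → e' ≠ idf Z →
          cmp e' (cmp π j) = 0 := by
        intro e' he' hee2 hne
        obtain ⟨Z', i', p', hF', hi', hp', hpi, hip, htd⟩ := split_idem hE hFZ e' he' hee2
        by_contra hne2
        apply hZmin _ (htd hne)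
        refine ⟨Z', cmp a i', cmp p' π, rfl, hF', ha.comp hi', hp'.comp hπ, ?_, ?_⟩
        · intro v z
          simp only [cmp_apply]
          rw [hπa, hpi]
        · intro h0
          apply hne2
          apply fam_ext
          intro v x
          have := LinearMap.congr_fun (congrFun h0 v) x
          simp only [cmp_apply] at this
          rw [cmp_apply, cmp_apply, ← hip, this]
          simp
      have c1 := claim e he hee he1
      have c2 := claim (idf Z - e) ((isHom_id Z).sub he) (by
        apply fam_ext
        intro v x
        simp [hee']) (by
        intro h1
        apply he0
        apply fam_ext
        intro v x
        have := LinearMap.congr_fun (congrFun h1 v) x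
        simpa using this)
      apply hπj
      apply fam_ext
      intro v x
      have d1 := LinearMap.congr_fun (congrFun c1 v) x
      have d2 := LinearMap.congr_fun (congrFun c2 v) x
      simp only [cmp_apply, Pi.sub_apply, LinearMap.sub_apply, idf_apply, Pi.zero_apply,
        LinearMap.zero_apply] at d1 d2
      rw [d1, sub_zero] at d2
      simpa using d2
    have hZd : tdim Z < d := by
      rw [← hMd]
      exact lt_of_le_of_lt (tdim_le_of_inj a hainj) hktd
    have hZexc := IH _ hZd Z rfl hFZ hZind
    -- injectivity of the projection of the image
    have hπjinj : Inj (cmp π j) := by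
      let φ' : Fam M M := cmp ι (cmp a (cmp (cmp π j) p))
      have hφ' : IsHom φ' := hι.comp (ha.comp ((hπ.comp hj).comp hp))
      have hφ'0 : φ' ≠ 0 := by
        obtain ⟨v, x, hx⟩ := fam_ne_zero hπj
        obtain ⟨y, rfl⟩ := hsurj v x
        intro h0
        apply hx
        apply hainj v
        apply hιinj v
        have := LinearMap.congr_fun (congrFun h0 v) y
        simpa [φ'] using this
      have hφ'2 : cmp φ' φ' = 0 := by
        apply fam_ext
        intro v x
        simp [φ', S.zero]
      have hle : rk φ ≤ rk φ' := by
        by_contra hlt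
        push Not at hlt
        exact absurd (hmin ⟨hφ', hφ'0, hφ'2⟩ hlt.le) (not_le.mpr hlt)
      obtain ⟨J, q, c, hq, hc, hcinj, hqsurj, hqc⟩ := exists_image (cmp π j) (hπ.comp hj)
      have r1 : rk φ = tdim I := by
        refine Finset.sum_congr rfl fun v _ => ?_
        have : LinearMap.range (φ v) = LinearMap.range (i v) := by
          ext y
          constructor
          · rintro ⟨x, rfl⟩; exact ⟨p v x, hfac v x⟩
          · rintro ⟨x, rfl⟩
            obtain ⟨z, rfl⟩ := hsurj v x
            exact ⟨z, (hfac v z).symm⟩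
        rw [this, LinearMap.finrank_range_of_inj (hinj v)]
        rfl
      have r2 : rk φ' = tdim J := by
        refine Finset.sum_congr rfl fun v _ => ?_
        have hin : Function.Injective (cmp ι (cmp a c) v) :=
          (hιinj v).comp ((hainj v).comp (hcinj v))
        have : LinearMap.range (φ' v) = LinearMap.range (cmp ι (cmp a c) v) := by
          ext y
          constructor
          · rintro ⟨x, rfl⟩
            refine ⟨q v (p v x), ?_⟩
            simp only [cmp_apply, φ']
            rw [hqc, cmp_apply]
          · rintro ⟨x, rfl⟩
            obtain ⟨x, rfl⟩ := hqsurj v x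
            obtain ⟨z, rfl⟩ := hsurj v x
            refine ⟨z, ?_⟩
            simp only [cmp_apply, φ']
            rw [hqc, cmp_apply]
        rw [this, LinearMap.finrank_range_of_inj hin]
        rfl
      have hqinj := inj_of_tdim q hqsurj (by rw [← r1, ← r2]; exact hle)
      intro v x y hxy
      apply hqinj v
      apply hcinj v
      rw [hqc, hqc, hxy]
    have hIZ : extDim I Z = 0 := by
      have h1 := extDim_le_of_inj Z (cmp π j) (hπ.comp hj) hπjinj
      have h2 : extDim Z Z = 0 := hZexc.1
      omega
    obtain ⟨g, hg, hg'⟩ := S.lift hIZ π hπ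
    rcases hind.2 (cmp ι (cmp a g)) (hι.comp (ha.comp hg)) (by
      apply fam_ext
      intro v x
      simp [hg', hπa]) with h0 | h1
    · obtain ⟨v, z, hz⟩ := hZne
      apply hz
      have := LinearMap.congr_fun (congrFun h0 v) (ι v (a v z))
      simp only [cmp_apply, hg', hπa, Pi.zero_apply, LinearMap.zero_apply] at this
      apply hainj v
      apply hιinj v
      rw [this]
      simp
    · apply hφ0
      apply fam_ext
      intro v x
      have := LinearMap.congr_fun (congrFun h1 v) x
      simp only [cmp_apply, idf_apply] at this
      rw [(hker2 v x).mpr ⟨_, this⟩]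
      simp
  refine ⟨?_, hschur⟩
  have h1 := hpos M hM hind.1
  rw [← euler_eq] at h1
  have h2 : homDim M M = 1 := hschur
  unfold IsRigid
  omega

end QuivRep

end Helpers

section Helpers

set_option linter.unusedSectionVars false

variable {K} {t h : A → V}

namespace QuivRep

/-- Precomposition as a linear map between morphism spaces. -/
def preL {X Z : QuivRep K V A t h} (p : Fam X Z) (hp : IsHom p) (Y : QuivRep K V A t h) :
    homS Z Y →ₗ[K] homS X Y where
  toFun f := ⟨cmp f.1 p, (mem_homS _).mpr (((mem_homS _).mp f.2).comp hp)⟩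
  map_add' f g := by
    apply Subtype.ext; apply fam_ext; intro v x; simp
  map_smul' c f := by
    apply Subtype.ext; apply fam_ext; intro v x; simp

/-- Postcomposition as a linear map between morphism spaces. -/
def postL {X Z : QuivRep K V A t h} (p : Fam X Z) (hp : IsHom p) (Y : QuivRep K V A t h) :
    homS Y X →ₗ[K] homS Y Z where
  toFun f := ⟨cmp p f.1, (mem_homS _).mpr (hp.comp ((mem_homS _).mp f.2))⟩
  map_add' f g := by
    apply Subtype.ext; apply fam_ext; intro v x; simp
  map_smul' c f := by
    apply Subtype.ext; apply fam_ext; intro v x; simp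

theorem preL_apply {X Z : QuivRep K V A t h} (p : Fam X Z) (hp : IsHom p)
    (Y : QuivRep K V A t h) (f : homS Z Y) (v : V) (x : X.sp v) :
    (preL p hp Y f).1 v x = f.1 v (p v x) := rfl

theorem postL_apply {X Z : QuivRep K V A t h} (p : Fam X Z) (hp : IsHom p)
    (Y : QuivRep K V A t h) (f : homS Y X) (v : V) (x : Y.sp v) :
    (postL p hp Y f).1 v x = p v (f.1 v x) := rfl

theorem SES.hom_le_left {M2 N M1 : QuivRep K V A t h} {i : Fam M2 N} {p : Fam N M1} (S : SES i p)
    (Z : QuivRep K V A t h) : homDim N Z ≤ homDim M2 Z + homDim M1 Z := by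
  have h1 := (preL i S.hi Z).finrank_range_add_finrank_ker
  have h2 : Module.finrank K (LinearMap.range (preL i S.hi Z)) ≤ homDim M2 Z :=
    Submodule.finrank_le _
  have h3 : LinearMap.ker (preL i S.hi Z) ≤ LinearMap.range (preL p S.hp Z) := by
    intro f hf
    have hf' : ∀ v x, f.1 v (i v x) = 0 := by
      intro v x
      rw [← preL_apply i S.hi, LinearMap.mem_ker.mp hf]
      simp
    obtain ⟨g, hg, hg'⟩ := factor_surj p S.hp S.surj f.1 ((mem_homS _).mp f.2) (by
      intro v x hx
      obtain ⟨y, rfl⟩ := S.exact v x hx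
      exact hf' v y)
    refine ⟨⟨g, (mem_homS _).mpr hg⟩, ?_⟩
    apply Subtype.ext
    apply fam_ext
    exact hg'
  have h4 := Submodule.finrank_mono h3
  have h5 : Module.finrank K (LinearMap.range (preL p S.hp Z)) ≤ homDim M1 Z :=
    LinearMap.finrank_range_le _
  unfold homDim at *
  omega

theorem SES.ker_post {M2 N M1 : QuivRep K V A t h} {i : Fam M2 N} {p : Fam N M1} (S : SES i p)
    (Z : QuivRep K V A t h) :
    Module.finrank K (LinearMap.ker (postL p S.hp Z)) ≤ homDim Z M2 := by
  have h3 : LinearMap.ker (postL p S.hp Z) ≤ LinearMap.range (postL i S.hi Z) := by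
    intro f hf
    have hf' : ∀ v x, p v (f.1 v x) = 0 := by
      intro v x
      rw [← postL_apply p S.hp, LinearMap.mem_ker.mp hf]
      simp
    obtain ⟨g, hg, hg'⟩ := factor_inj i S.hi S.inj f.1 ((mem_homS _).mp f.2)
      (fun v x => S.exact v _ (hf' v x))
    refine ⟨⟨g, (mem_homS _).mpr hg⟩, ?_⟩
    apply Subtype.ext
    apply fam_ext
    exact hg'
  have h4 := Submodule.finrank_mono h3
  have h5 : Module.finrank K (LinearMap.range (postL i S.hi Z)) ≤ homDim Z M2 :=
    LinearMap.finrank_range_le _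
  omega

theorem SES.hom_le_right {M2 N M1 : QuivRep K V A t h} {i : Fam M2 N} {p : Fam N M1} (S : SES i p)
    (Z : QuivRep K V A t h) : homDim Z N ≤ homDim Z M2 + homDim Z M1 := by
  have h1 := (postL p S.hp Z).finrank_range_add_finrank_ker
  have h2 : Module.finrank K (LinearMap.range (postL p S.hp Z)) ≤ homDim Z M1 :=
    Submodule.finrank_le _
  have h3 := S.ker_post Z
  unfold homDim at *
  omega

theorem SES.hom_lt {M2 N M1 : QuivRep K V A t h} {i : Fam M2 N} {p : Fam N M1} (S : SES i p)
    (hns : ¬ ∃ s : Fam M1 N, IsHom s ∧ ∀ v x, p v (s v x) = x) :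
    homDim M1 N < homDim M1 M2 + homDim M1 M1 := by
  have h1 := (postL p S.hp M1).finrank_range_add_finrank_ker
  have h2 : Module.finrank K (LinearMap.range (postL p S.hp M1)) < homDim M1 M1 := by
    apply Submodule.finrank_lt
    intro htop
    have hmem : (⟨idf M1, (mem_homS _).mpr (isHom_id M1)⟩ : homS M1 M1) ∈
        LinearMap.range (postL p S.hp M1) := by rw [htop]; trivial
    obtain ⟨s, hs⟩ := hmem
    refine hns ⟨s.1, (mem_homS _).mp s.2, fun v x => ?_⟩
    rw [← postL_apply p S.hp, hs]
    rfl
  have h3 := S.ker_post M1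
  unfold homDim at *
  omega

/-- A nonzero `Ext` group gives a nonsplit extension. -/
theorem exists_nonsplit {M1 M2 : QuivRep K V A t h} (hne : extDim M1 M2 ≠ 0) :
    ∃ (N : QuivRep K V A t h) (i : Fam M2 N) (p : Fam N M1), SES i p ∧
      ¬ ∃ s : Fam M1 N, IsHom s ∧ ∀ v x, p v (s v x) = x := by
  rw [Ne, extDim_eq_zero_iff] at hne
  unfold Function.Surjective at hne
  push Not at hne
  obtain ⟨c, hc⟩ := hne
  let N : QuivRep K V A t h :=
    { sp := fun v => M2.sp v × M1.sp v
      map := fun a => LinearMap.prod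
        ((M2.map a).comp (LinearMap.fst K _ _) + (c a).comp (LinearMap.snd K _ _))
        ((M1.map a).comp (LinearMap.snd K _ _)) }
  have hN : ∀ (a : A) (y : M2.sp (t a)) (x : M1.sp (t a)),
      N.map a (y, x) = (M2.map a y + c a x, M1.map a x) := fun a y x => rfl
  refine ⟨N, fun v => LinearMap.inl K (M2.sp v) (M1.sp v),
    fun v => LinearMap.snd K (M2.sp v) (M1.sp v), ⟨?_, ?_, ?_, ?_, ?_, ?_⟩, ?_⟩
  · intro a x
    change (M2.map a x, (0 : M1.sp (h a))) = N.map a (x, 0)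
    rw [hN]
    simp
  · intro a x
    rfl
  · intro v
    exact LinearMap.inl_injective
  · intro v
    exact LinearMap.snd_surjective
  · intro v x
    rfl
  · rintro v ⟨y, x⟩ hx
    have hx' : x = 0 := hx
    subst hx'
    exact ⟨y, rfl⟩
  · rintro ⟨s, hs, hs'⟩
    apply hc (fun v => (LinearMap.fst K (M2.sp v) (M1.sp v)).comp (s v))
    funext a
    ext x
    rw [dmap_apply]
    have h1 : s (t a) x = ((s (t a) x).1, x) := Prod.ext rfl (hs' (t a) x)
    have h2 := hs a x
    rw [h1, hN] at h2
    have h3 : (s (h a) (M1.map a x)).1 = M2.map a (s (t a) x).1 + c a x := congrArg Prod.fst h2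
    change (s (h a) (M1.map a x)).1 - M2.map a (s (t a) x).1 = c a x
    rw [h3]
    abel

/-- Decomposition into indecomposables. -/
theorem decompose {l : ℕ} {E : Fin l → QuivRep K V A t h} (hE : Orth E) :
    ∀ (d : ℕ) (X : QuivRep K V A t h), tdim X = d → Filt E X →
    ∃ L : Multiset (QuivRep K V A t h), (∀ Z ∈ L, Filt E Z ∧ Indec Z) ∧
      (L.map QuivRep.dimVec).sum = X.dimVec ∧
      (∀ Y, (L.map fun Z => homDim Z Y).sum ≤ homDim X Y) ∧
      (∀ Y, (L.map fun Z => homDim Y Z).sum ≤ homDim Y X) := by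
  intro d
  induction d using Nat.strong_induction_on with
  | _ d IH =>
  intro X hXd hX
  by_cases hz : ∃ v, ∃ x : X.sp v, x ≠ 0
  swap
  · push Not at hz
    refine ⟨0, by simp, ?_, by simp, by simp⟩
    funext v
    have : Subsingleton (X.sp v) := ⟨fun x y => by rw [hz v x, hz v y]⟩
    simpa [QuivRep.dimVec] using
      (Module.finrank_zero_of_subsingleton (R := K) (M := X.sp v)).symm
  by_cases hind : Indec X
  · exact ⟨{X}, by simp [hX, hind], by simp, by simp, by simp⟩
  have hex : ∃ e : Fam X X, IsHom e ∧ cmp e e = e ∧ e ≠ 0 ∧ e ≠ idf X := by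
    by_contra hcon
    push Not at hcon
    refine hind ⟨hz, fun e he hee => ?_⟩
    by_cases h0 : e = 0
    · exact Or.inl h0
    · exact Or.inr (hcon e he hee h0)
  obtain ⟨e, he, hee, he0, he1⟩ := hex
  have hee' : ∀ v x, e v (e v x) = e v x := fun v x =>
    LinearMap.congr_fun (congrFun hee v) x
  obtain ⟨Z1, i1, p1, hF1, hi1, hp1, hpi1, hip1, htd1⟩ := split_idem hE hX e he hee
  obtain ⟨Z2, i2, p2, hF2, hi2, hp2, hpi2, hip2, htd2⟩ :=
    split_idem hE hX (idf X - e) ((isHom_id X).sub he) (by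
      apply fam_ext
      intro v x
      simp [hee'])
  have hlt2 := htd2 (by
    intro h1
    apply he0
    apply fam_ext
    intro v x
    have := LinearMap.congr_fun (congrFun h1 v) x
    simpa using this)
  have hlt1 := htd1 he1
  have hip2' : ∀ v x, i2 v (p2 v x) = x - e v x := fun v x => by rw [hip2]; simp
  have hi2inj : Inj i2 := fun v x y hxy => by rw [← hpi2 v x, hxy, hpi2]
  have hi1inj : Inj i1 := fun v x y hxy => by rw [← hpi1 v x, hxy, hpi1]
  have he_i1 : ∀ v z, e v (i1 v z) = i1 v z := fun v z => by rw [← hip1, hpi1]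
  have hp2i1 : ∀ v z, p2 v (i1 v z) = 0 := fun v z => hi2inj v (by
    rw [hip2', he_i1]; simp)
  have he_i2 : ∀ v z, e v (i2 v z) = 0 := fun v z => by
    have := hip2' v (i2 v z)
    rw [hpi2] at this
    exact (sub_eq_self.mp this.symm)
  have hp1i2 : ∀ v z, p1 v (i2 v z) = 0 := fun v z => hi1inj v (by
    rw [hip1, he_i2]; simp)
  have S : SES i1 p2 := ⟨hi1, hp2, hi1inj, fun v z => ⟨i2 v z, hpi2 v z⟩, hp2i1, by
    intro v y hy
    refine ⟨p1 v y, ?_⟩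
    have := hip2' v y
    rw [hy, map_zero] at this
    rw [hip1]
    exact (sub_eq_zero.mp this.symm).symm⟩
  obtain ⟨L1, a1, b1, c1, d1⟩ := IH _ (hXd ▸ hlt1) Z1 rfl hF1
  obtain ⟨L2, a2, b2, c2, d2⟩ := IH _ (hXd ▸ hlt2) Z2 rfl hF2
  refine ⟨L1 + L2, ?_, ?_, ?_, ?_⟩
  · intro Z hZ
    rcases Multiset.mem_add.mp hZ with h1 | h1
    · exact a1 Z h1
    · exact a2 Z h1
  · rw [Multiset.map_add, Multiset.sum_add, b1, b2, S.dim]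
  · intro Y
    rw [Multiset.map_add, Multiset.sum_add]
    refine le_trans (add_le_add (c1 Y) (c2 Y)) ?_
    have := LinearMap.finrank_le_finrank_of_injective
      (f := LinearMap.coprod (preL p1 hp1 Y) (preL p2 hp2 Y)) (by
        rw [injective_iff_map_eq_zero]
        rintro ⟨f1, f2⟩ h0
        have h0' : ∀ v x, f1.1 v (p1 v x) + f2.1 v (p2 v x) = 0 := fun v x => by
          have := LinearMap.congr_fun (congrFun (congrArg Subtype.val h0) v) x
          exact this
        apply Prod.ext
        · apply Subtype.ext; apply fam_ext
          intro v z
          have := h0' v (i1 v z)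
          rw [hpi1, hp2i1] at this
          simpa using this
        · apply Subtype.ext; apply fam_ext
          intro v z
          have := h0' v (i2 v z)
          rw [hpi2, hp1i2] at this
          simpa using this)
    rw [Module.finrank_prod] at this
    exact this
  · intro Y
    rw [Multiset.map_add, Multiset.sum_add]
    refine le_trans (add_le_add (d1 Y) (d2 Y)) ?_
    have := LinearMap.finrank_le_finrank_of_injective
      (f := LinearMap.coprod (postL i1 hi1 Y) (postL i2 hi2 Y)) (by
        rw [injective_iff_map_eq_zero]
        rintro ⟨f1, f2⟩ h0
        have h0' : ∀ v x, i1 v (f1.1 v x) + i2 v (f2.1 v x) = 0 := fun v x => by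
          have := LinearMap.congr_fun (congrFun (congrArg Subtype.val h0) v) x
          exact this
        apply Prod.ext
        · apply Subtype.ext; apply fam_ext
          intro v z
          have := congrArg (p1 v) (h0' v z)
          rw [map_add, hpi1, hp1i2] at this
          simpa using this
        · apply Subtype.ext; apply fam_ext
          intro v z
          have := congrArg (p2 v) (h0' v z)
          rw [map_add, hpi2, hp2i1] at this
          simpa using this)
    rw [Module.finrank_prod] at this
    exact this

/-- The morphism dimension between two finite multisets of representations. -/
def homMS (S T : Multiset (QuivRep K V A t h)) : ℕ :=
  (S.map fun X => (T.map fun Y => homDim X Y).sum).sum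

theorem homMS_comm (S T : Multiset (QuivRep K V A t h)) :
    homMS S T = (T.map fun Y => (S.map fun X => homDim X Y).sum).sum := by
  unfold homMS
  exact Multiset.sum_map_sum_map S T

/-- Configurations of indecomposable filtered objects. -/
def Config {l : ℕ} (E : Fin l → QuivRep K V A t h) (α : V → ℕ)
    (S : Multiset (QuivRep K V A t h)) : Prop :=
  (∀ Z ∈ S, Filt E Z ∧ Indec Z) ∧ (S.map QuivRep.dimVec).sum = α

/-- A configuration with minimal endomorphism dimension has no mutual extensions. -/
theorem exists_rigid_config {l : ℕ} {E : Fin l → QuivRep K V A t h} (hE : Orth E) {α : V → ℕ}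
    (hex : ∃ S, Config E α S) :
    ∃ S, Config E α S ∧ ∀ X Y R, S = X ::ₘ Y ::ₘ R → extDim X Y = 0 := by
  obtain ⟨S, hS, hmin⟩ := exists_minimalFor_of_wellFoundedLT
      (fun S => Config E α S) (fun S => homMS S S) hex
  refine ⟨S, hS, ?_⟩
  intro M1 M2 R hSR
  by_contra hne
  obtain ⟨N, i, p, hs, hns⟩ := exists_nonsplit hne
  have hF1 : Filt E M1 := (hS.1 M1 (by simp [hSR])).1
  have hF2 : Filt E M2 := (hS.1 M2 (by simp [hSR])).1
  obtain ⟨L, a, b, c, d⟩ := decompose hE _ N rfl (hF1.extension hF2 hs)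
  have hconf : Config E α (L + R) := by
    constructor
    · intro Z hZ
      rcases Multiset.mem_add.mp hZ with h1 | h1
      · exact a Z h1
      · exact hS.1 Z (by simp [hSR, h1])
    · rw [← hS.2, hSR, Multiset.map_add, Multiset.sum_add, b, hs.dim]
      simp only [Multiset.map_cons, Multiset.sum_cons]
      rw [← add_assoc, add_comm M2.dimVec]
  have left : ∀ Z, ((L + R).map fun X => homDim X Z).sum ≤ (S.map fun X => homDim X Z).sum := by
    intro Z
    rw [hSR, Multiset.map_add, Multiset.sum_add]
    simp only [Multiset.map_cons, Multiset.sum_cons]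
    have := c Z
    have := hs.hom_le_left Z
    omega
  have right : ∀ Z, ((L + R).map fun X => homDim Z X).sum ≤ (S.map fun X => homDim Z X).sum := by
    intro Z
    rw [hSR, Multiset.map_add, Multiset.sum_add]
    simp only [Multiset.map_cons, Multiset.sum_cons]
    have := d Z
    have := hs.hom_le_right Z
    omega
  have strict : ((L + R).map fun X => homDim M1 X).sum < (S.map fun X => homDim M1 X).sum := by
    rw [hSR, Multiset.map_add, Multiset.sum_add]
    simp only [Multiset.map_cons, Multiset.sum_cons]
    have := d M1
    have := hs.hom_lt hns
    omega
  have h1 : homMS (L + R) (L + R) ≤ homMS S (L + R) := by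
    rw [homMS_comm, homMS_comm S]
    exact Multiset.sum_map_le_sum_map _ _ fun Z _ => left Z
  have h2 : homMS S (L + R) < homMS S S := by
    unfold homMS
    have hS1 : S = M1 ::ₘ (M2 ::ₘ R) := hSR
    have e1 : ∀ f : QuivRep K V A t h → ℕ, (S.map f).sum = f M1 + ((M2 ::ₘ R).map f).sum := by
      intro f
      rw [hS1, Multiset.map_cons, Multiset.sum_cons]
    rw [e1 fun X => (Multiset.map (fun Y => homDim X Y) (L + R)).sum,
      e1 fun X => (Multiset.map (fun Y => homDim X Y) S).sum]
    exact add_lt_add_of_lt_of_le strict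
      (Multiset.sum_map_le_sum_map _ _ fun Z _ => right Z)
  have h3 : homMS (L + R) (L + R) < homMS S S := lt_of_le_of_lt h1 h2
  exact absurd (hmin hconf h3.le) (not_le.mpr h3)

end QuivRep

end Helpers

section Helpers

set_option linter.unusedSectionVars false

variable {K} {t h : A → V}

/-- Surjectivity is a generic condition on a line of linear maps. -/
theorem generic_surj {U W : Type} [AddCommGroup U] [Module K U] [AddCommGroup W] [Module K W]
    [FiniteDimensional K W] (F0 F1 : U →ₗ[K] W) (s0 : K)
    (hs : Function.Surjective (F0 + s0 • F1)) :
    {s : K | ¬ Function.Surjective (F0 + s • F1)}.Finite := by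
  obtain ⟨R, hR⟩ := (F0 + s0 • F1).exists_rightInverse_of_surjective
    (LinearMap.range_eq_top.mpr hs)
  let b := Module.finBasis K W
  let G0 := LinearMap.toMatrix b b (F0.comp R)
  let G1 := LinearMap.toMatrix b b (F1.comp R)
  let P : Polynomial K :=
    (G0.map Polynomial.C + (Polynomial.X : Polynomial K) • G1.map Polynomial.C).det
  have hP : ∀ s, P.eval s = LinearMap.det ((F0 + s • F1).comp R) := by
    intro s
    have h1 : P.eval s = (G0 + s • G1).det := by
      rw [← Polynomial.coe_evalRingHom, RingHom.map_det]
      congr 1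
      ext i j
      simp
      exact mul_comm _ _
    rw [h1, ← LinearMap.det_toMatrix b]
    congr 1
    simp only [G0, G1, LinearMap.add_comp, LinearMap.smul_comp, map_add, map_smul]
  have hP0 : P ≠ 0 := by
    intro h0
    have h1 := hP s0
    rw [h0, hR] at h1
    simp at h1
  refine (Polynomial.finite_setOfPred_isRoot hP0).subset ?_
  intro s hs'
  by_contra hr
  apply hs'
  have hu : IsUnit (LinearMap.det ((F0 + s • F1).comp R)) := by
    rw [← hP]
    exact isUnit_iff_ne_zero.mpr hr
  have hb := (LinearMap.isUnit_iff_isUnit_det _).mpr hu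
  have hb2 := (Module.End.isUnit_iff _).mp hb
  intro w
  obtain ⟨x, hx⟩ := hb2.2 w
  exact ⟨R x, hx⟩

namespace QuivRep

/-- The line of representations through `E` and the one with maps `F`. -/
def line (E : QuivRep K V A t h) (F : ∀ a : A, E.sp (t a) →ₗ[K] E.sp (h a)) (s : K) :
    QuivRep K V A t h where
  sp := E.sp
  map a := E.map a + s • (F a - E.map a)

theorem line_dimVec (E : QuivRep K V A t h) (F : ∀ a : A, E.sp (t a) →ₗ[K] E.sp (h a)) (s : K) :
    (line E F s).dimVec = E.dimVec := rfl

theorem line_left (E : QuivRep K V A t h) (F : ∀ a : A, E.sp (t a) →ₗ[K] E.sp (h a))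
    (Y : QuivRep K V A t h) (s0 : K) (h0 : extDim (line E F s0) Y = 0) :
    {s | ¬ extDim (line E F s) Y = 0}.Finite := by
  let D : K → ((∀ i, E.sp i →ₗ[K] Y.sp i) →ₗ[K] (∀ a : A, E.sp (t a) →ₗ[K] Y.sp (h a))) :=
    fun s => dmap (line E F s) Y
  have hD : ∀ s, D s = D 0 + s • (D 1 - D 0) := by
    intro s
    refine LinearMap.ext fun φ => funext fun a => LinearMap.ext fun x => ?_
    show φ (h a) ((E.map a + s • (F a - E.map a)) x) - Y.map a (φ (t a) x) =
      (φ (h a) ((E.map a + (0:K) • (F a - E.map a)) x) - Y.map a (φ (t a) x)) +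
      s • ((φ (h a) ((E.map a + (1:K) • (F a - E.map a)) x) - Y.map a (φ (t a) x)) -
       (φ (h a) ((E.map a + (0:K) • (F a - E.map a)) x) - Y.map a (φ (t a) x)))
    simp only [LinearMap.add_apply, LinearMap.smul_apply, LinearMap.sub_apply, map_add, map_smul,
      map_sub]
    module
  have h1 : Function.Surjective (D s0) := (extDim_eq_zero_iff (line E F s0) Y).mp h0
  rw [hD] at h1
  refine (generic_surj _ _ _ h1).subset ?_
  intro s hs h2
  apply hs
  rw [← hD] at h2
  exact (extDim_eq_zero_iff (line E F s) Y).mpr h2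

theorem line_right (E : QuivRep K V A t h) (F : ∀ a : A, E.sp (t a) →ₗ[K] E.sp (h a))
    (Y : QuivRep K V A t h) (s0 : K) (h0 : extDim Y (line E F s0) = 0) :
    {s | ¬ extDim Y (line E F s) = 0}.Finite := by
  let D : K → ((∀ i, Y.sp i →ₗ[K] E.sp i) →ₗ[K] (∀ a : A, Y.sp (t a) →ₗ[K] E.sp (h a))) :=
    fun s => dmap Y (line E F s)
  have hD : ∀ s, D s = D 0 + s • (D 1 - D 0) := by
    intro s
    refine LinearMap.ext fun φ => funext fun a => LinearMap.ext fun x => ?_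
    show φ (h a) (Y.map a x) - (E.map a + s • (F a - E.map a)) (φ (t a) x) =
      (φ (h a) (Y.map a x) - (E.map a + (0:K) • (F a - E.map a)) (φ (t a) x)) +
      s • ((φ (h a) (Y.map a x) - (E.map a + (1:K) • (F a - E.map a)) (φ (t a) x)) -
       (φ (h a) (Y.map a x) - (E.map a + (0:K) • (F a - E.map a)) (φ (t a) x)))
    simp only [LinearMap.add_apply, LinearMap.smul_apply, LinearMap.sub_apply, map_add, map_smul,
      map_sub]
    module
  have h1 : Function.Surjective (D s0) := (extDim_eq_zero_iff Y (line E F s0)).mp h0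
  rw [hD] at h1
  refine (generic_surj _ _ _ h1).subset ?_
  intro s hs h2
  apply hs
  rw [← hD] at h2
  exact (extDim_eq_zero_iff Y (line E F s)).mpr h2

theorem line_self (E : QuivRep K V A t h) (F : ∀ a : A, E.sp (t a) →ₗ[K] E.sp (h a))
    (s0 : K) (h0 : extDim (line E F s0) (line E F s0) = 0) :
    {s | ¬ extDim (line E F s) (line E F s) = 0}.Finite := by
  let D : K → ((∀ i, E.sp i →ₗ[K] E.sp i) →ₗ[K] (∀ a : A, E.sp (t a) →ₗ[K] E.sp (h a))) :=
    fun s => dmap (line E F s) (line E F s)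
  have hD : ∀ s, D s = D 0 + s • (D 1 - D 0) := by
    intro s
    refine LinearMap.ext fun φ => funext fun a => LinearMap.ext fun x => ?_
    show φ (h a) ((E.map a + s • (F a - E.map a)) x)
          - (E.map a + s • (F a - E.map a)) (φ (t a) x) =
      (φ (h a) ((E.map a + (0:K) • (F a - E.map a)) x)
          - (E.map a + (0:K) • (F a - E.map a)) (φ (t a) x)) +
      s • ((φ (h a) ((E.map a + (1:K) • (F a - E.map a)) x)
          - (E.map a + (1:K) • (F a - E.map a)) (φ (t a) x)) -
       (φ (h a) ((E.map a + (0:K) • (F a - E.map a)) x)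
          - (E.map a + (0:K) • (F a - E.map a)) (φ (t a) x)))
    simp only [LinearMap.add_apply, LinearMap.smul_apply, LinearMap.sub_apply, map_add, map_smul,
      map_sub]
    module
  have h1 : Function.Surjective (D s0) :=
    (extDim_eq_zero_iff (line E F s0) (line E F s0)).mp h0
  rw [hD] at h1
  refine (generic_surj _ _ _ h1).subset ?_
  intro s hs h2
  apply hs
  rw [← hD] at h2
  exact (extDim_eq_zero_iff (line E F s) (line E F s)).mpr h2

theorem line_zero (E : QuivRep K V A t h) (F : ∀ a : A, E.sp (t a) →ₗ[K] E.sp (h a)) :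
    line E F 0 = E := by
  cases E
  simp [line]

/-- Two exceptional representations of the same dimension without extensions are related
by a bijective morphism. -/
theorem exc_iso {M E : QuivRep K V A t h} (hd : M.dimVec = E.dimVec) (hM : M.IsExceptional)
    (hE : E.IsExceptional) (e1 : extDim M E = 0) (e2 : extDim E M = 0) :
    ∃ f : Fam M E, IsHom f ∧ Inj f ∧ Surj f := by
  have hMM : extDim M M = 0 := hM.1
  have hEE : extDim E E = 0 := hE.1
  have hM1 : homDim M M = 1 := hM.2
  have eMM := euler_eq M M
  have eME := euler_eq M E
  have eEM := euler_eq E M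
  rw [← hd] at eME eEM
  have hME : homDim M E = 1 := by omega
  have hEM : homDim E M = 1 := by omega
  obtain ⟨f, hf, hf0⟩ := (homDim_pos_iff M E).mp (by omega)
  have htd : tdim M = tdim E := by unfold tdim; rw [hd]
  refine ⟨f, hf, ?_⟩
  by_cases hinj' : Inj f
  · exact ⟨hinj', surj_of_tdim f hinj' (by omega)⟩
  by_cases hsurj' : Surj f
  · exact ⟨inj_of_tdim f hsurj' (by omega), hsurj'⟩
  exfalso
  obtain ⟨I, p, i, hp, hi, hinj, hsurj, hfac⟩ := exists_image f hf
  obtain ⟨k, j, hj, hjinj, hker⟩ := exists_ker p hp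
  obtain ⟨C, q, hq⟩ := exists_coker i hi hinj
  have S1 : SES j p := ⟨hj, hp, hjinj, hsurj, fun v x => (hker v _).mpr ⟨x, rfl⟩,
    fun v y hy => (hker v y).mp hy⟩
  have hYI : homDim E I = 0 := by
    rw [homDim_eq_zero_iff]
    intro g hg
    obtain ⟨c, hc⟩ := schur_scalar hE.2 (cmp i g) (hi.comp hg)
    have hc' : ∀ v x, i v (g v x) = c • x := fun v x => by
      have := LinearMap.congr_fun (congrFun hc v) x
      simpa using this
    by_cases hc0 : c = 0
    · apply fam_ext
      intro v x
      apply hinj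
      rw [hc', hc0]
      simp
    · exfalso
      apply hsurj'
      intro v y
      obtain ⟨x, hx⟩ := hsurj v (g v (c⁻¹ • y))
      refine ⟨x, ?_⟩
      rw [← hfac, hx, hc', smul_inv_smul₀ hc0]
  have hIX : homDim I M = 0 := by
    rw [homDim_eq_zero_iff]
    intro g hg
    obtain ⟨c, hc⟩ := schur_scalar hM.2 (cmp g p) (hg.comp hp)
    have hc' : ∀ v x, g v (p v x) = c • x := fun v x => by
      have := LinearMap.congr_fun (congrFun hc v) x
      simpa using this
    by_cases hc0 : c = 0
    · apply fam_ext
      intro v x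
      obtain ⟨x, rfl⟩ := hsurj v x
      rw [hc', hc0]
      simp
    · exfalso
      apply hinj'
      apply inj_of_ker
      intro v x hx
      rw [← hfac] at hx
      have h1 : p v x = 0 := hinj v (by rw [hx, map_zero])
      have h2 := hc' v x
      rw [h1, map_zero] at h2
      exact (smul_eq_zero.mp h2.symm).resolve_left hc0
  have eYI : extDim E I = 0 := by
    have := extDim_le_of_surj E p hp hsurj
    omega
  have eIX : extDim I M = 0 := by
    have := extDim_le_of_inj M i hi hinj
    omega
  have eII : extDim I I = 0 := by
    have := extDim_le_of_surj I p hp hsurj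
    omega
  have hII : 0 < homDim I I := by
    rw [homDim_pos_iff]
    refine ⟨idf I, isHom_id I, ?_⟩
    intro h1
    obtain ⟨v, x, hx⟩ := fam_ne_zero hf0
    apply hx
    rw [← hfac]
    have : idf I v (p v x) = 0 := by rw [h1]; simp
    rw [idf_apply] at this
    rw [this, map_zero]
  have hCk : 2 ≤ homDim C k := by
    have d1 := S1.dim
    have d2 := hq.dim
    have a1 := euler_eq C k
    have a2 := euler_eq E M
    have a3 := euler_eq E I
    have a4 := euler_eq I M
    have a5 := euler_eq I I
    rw [d1, d2] at a2
    rw [d2] at a3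
    rw [d1] at a4
    simp only [natZ_add, eulerForm_add_left, eulerForm_add_right] at a1 a2 a3 a4 a5
    simp only [hEM, e2, hYI, eYI, hIX, eIX, eII] at a2 a3 a4 a5
    push_cast at *
    omega
  have hle : homDim C k ≤ homDim E M := by
    refine LinearMap.finrank_le_finrank_of_injective
      (f := (postL j hj E).comp (preL q hq.hp k)) ?_
    rw [← LinearMap.ker_eq_bot, LinearMap.ker_eq_bot']
    intro g hg
    apply Subtype.ext
    apply fam_ext
    intro v x
    obtain ⟨y, rfl⟩ := hq.surj v x
    apply hjinj
    have h3 : j v (g.1 v (q v y)) = 0 :=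
      LinearMap.congr_fun (congrFun (congrArg Subtype.val hg) v) y
    rw [h3]
    simp
  omega

/-- Transport of a representation along linear isomorphisms. -/
theorem exists_line [Infinite K] {E X : QuivRep K V A t h} (hE : E.IsExceptional)
    (hd : X.dimVec = E.dimVec) : ∃ F : ∀ a : A, E.sp (t a) →ₗ[K] E.sp (h a),
      (∃ f : Fam (line E F 1) X, IsHom f ∧ Inj f ∧ Surj f) ∧
      (∃ f : Fam X (line E F 1), IsHom f ∧ Inj f ∧ Surj f) ∧
      ∀ T : Set K, T.Finite → ∃ s, s ∉ T ∧ 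
        (∃ f : Fam (line E F s) E, IsHom f ∧ Inj f ∧ Surj f) ∧
        (∃ f : Fam E (line E F s), IsHom f ∧ Inj f ∧ Surj f) := by
  have he : ∀ v, Module.finrank K (X.sp v) = Module.finrank K (E.sp v) := fun v => congrFun hd v
  let e : ∀ v, X.sp v ≃ₗ[K] E.sp v := fun v => LinearEquiv.ofFinrankEq _ _ (he v)
  let F : ∀ a : A, E.sp (t a) →ₗ[K] E.sp (h a) := fun a =>
    (e (h a)).toLinearMap.comp ((X.map a).comp (e (t a)).symm.toLinearMap)
  have hF1 : ∀ a x, (line E F 1).map a x = F a x := by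
    intro a x
    show (E.map a + (1:K) • (F a - E.map a)) x = F a x
    simp
  refine ⟨F, ⟨fun v => (e v).symm.toLinearMap, ?_, fun v => (e v).symm.injective,
    fun v => (e v).symm.surjective⟩, ⟨fun v => (e v).toLinearMap, ?_, fun v => (e v).injective,
    fun v => (e v).surjective⟩, ?_⟩
  · intro a x
    rw [hF1]
    show (e (h a)).symm (e (h a) (X.map a ((e (t a)).symm x))) = X.map a ((e (t a)).symm x)
    simp
  · intro a x
    rw [hF1]
    show e (h a) (X.map a x) = e (h a) (X.map a ((e (t a)).symm (e (t a) x)))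
    simp
  · intro T hT
    have h0 := line_zero E F
    have hEE : extDim E E = 0 := hE.1
    have hf1 := line_left E F E 0 (by rw [h0]; exact hEE)
    have hf2 := line_right E F E 0 (by rw [h0]; exact hEE)
    have hf3 := line_self E F 0 (by rw [h0]; exact hEE)
    obtain ⟨s, hs⟩ := (((hf1.union hf2).union hf3).union hT).infinite_compl.nonempty
    simp only [Set.mem_compl_iff, Set.mem_union, Set.mem_ofPred_eq, not_or, not_not] at hs
    obtain ⟨⟨⟨a1, a2⟩, a3⟩, a4⟩ := hs
    have hM : (line E F s).IsExceptional := by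
      refine ⟨a3, ?_⟩
      have b1 := euler_eq (line E F s) (line E F s)
      have b2 := euler_eq E E
      rw [line_dimVec] at b1
      have : homDim E E = 1 := hE.2
      show homDim _ _ = 1
      omega
    exact ⟨s, a4, exc_iso rfl hM hE a1 a2, exc_iso rfl hE hM a2 a1⟩

theorem transfer_left [Infinite K] {E X : QuivRep K V A t h} (hE : E.IsExceptional)
    (hd : X.dimVec = E.dimVec) (Y : QuivRep K V A t h) (h0 : extDim X Y = 0) :
    extDim E Y = 0 := by
  obtain ⟨F, ⟨f, hf, hfi, -⟩, -, hs⟩ := exists_line hE hd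
  have h1 := extDim_le_of_inj Y f hf hfi
  obtain ⟨s, hs, -, ⟨g, hg, hgi, -⟩⟩ := hs _ (line_left E F Y 1 (by omega))
  have h2 := extDim_le_of_inj Y g hg hgi
  simp only [Set.mem_ofPred_eq, not_not] at hs
  omega

theorem transfer_right [Infinite K] {E X : QuivRep K V A t h} (hE : E.IsExceptional)
    (hd : X.dimVec = E.dimVec) (Y : QuivRep K V A t h) (h0 : extDim Y X = 0) :
    extDim Y E = 0 := by
  obtain ⟨F, -, ⟨f, hf, -, hfs⟩, hs⟩ := exists_line hE hd
  have h1 := extDim_le_of_surj Y f hf hfs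
  obtain ⟨s, hs, ⟨g, hg, -, hgs⟩, -⟩ := hs _ (line_right E F Y 1 (by omega))
  have h2 := extDim_le_of_surj Y g hg hgs
  simp only [Set.mem_ofPred_eq, not_not] at hs
  omega

end QuivRep

end Helpers

section Helpers

set_option linter.unusedSectionVars false

variable {K} {t h : A → V}

/-- A positive definite quadratic form represents `1` only finitely often on lattice points. -/
theorem finite_roots {l : ℕ} (M : Matrix (Fin l) (Fin l) ℚ)
    (hM : ∀ η : Fin l → ℚ, η ≠ 0 → 0 < ∑ i, ∑ j, M i j * η i * η j) :
    {n : Fin l → ℕ | ∑ i, ∑ j, M i j * (n i : ℚ) * (n j : ℚ) = 1}.Finite := by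
  let S : Matrix (Fin l) (Fin l) ℚ := M + M.transpose
  let B : LinearMap.BilinForm ℚ (Fin l → ℚ) := Matrix.toBilin' S
  have hB : ∀ x y, B x y = ∑ i, ∑ j, (M i j + M j i) * x i * y j := by
    intro x y
    simp only [B, Matrix.toBilin'_apply, S, Matrix.add_apply, Matrix.transpose_apply]
    refine Finset.sum_congr rfl fun i _ => Finset.sum_congr rfl fun j _ => by ring
  have hBq : ∀ x, B x x = 2 * ∑ i, ∑ j, M i j * x i * x j := by
    intro x
    rw [hB]
    have h1 : ∑ i, ∑ j, M j i * x i * x j = ∑ i, ∑ j, M i j * x i * x j := by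
      rw [Finset.sum_comm]
      refine Finset.sum_congr rfl fun i _ => Finset.sum_congr rfl fun j _ => by ring
    simp only [add_mul, Finset.sum_add_distrib]
    rw [h1]
    ring
  have hBpos : ∀ x, x ≠ 0 → 0 < B x x := by
    intro x hx
    rw [hBq]
    have := hM x hx
    linarith
  have hBnn : ∀ x, 0 ≤ B x x := by
    intro x
    by_cases hx : x = 0
    · simp [hx]
    · exact (hBpos x hx).le
  have hBs : ∀ x y, B x y = B y x := by
    intro x y
    rw [hB, hB, Finset.sum_comm]
    refine Finset.sum_congr rfl fun i _ => Finset.sum_congr rfl fun j _ => by ring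
  have hBsymm : LinearMap.IsSymm B := ⟨fun x y => by rw [RingHom.id_apply]; exact hBs x y⟩
  have hinj : Function.Injective B := by
    rw [← LinearMap.ker_eq_bot, LinearMap.ker_eq_bot']
    intro x hx
    by_contra hx0
    have := hBpos x hx0
    rw [hx] at this
    simp at this
  have hsurj : Function.Surjective B :=
    (LinearMap.injective_iff_surjective_of_finrank_eq_finrank
      (by rw [Subspace.dual_finrank_eq])).mp hinj
  choose w hw using fun i : Fin l => hsurj (LinearMap.proj i)
  have hcoord : ∀ (x : Fin l → ℚ) i, (x i) ^ 2 ≤ B x x * B (w i) (w i) := by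
    intro x i
    have h1 : B (w i) x = x i := by rw [hw]; rfl
    have h2 := LinearMap.BilinForm.apply_sq_le_of_symm B hBnn hBsymm x (w i)
    rwa [hBs x, h1] at h2
  refine (Set.finite_Iic (fun i : Fin l => ⌈2 * B (w i) (w i)⌉₊)).subset ?_
  intro n hn i
  have h1 := hcoord (fun j => (n j : ℚ)) i
  rw [hBq, show ∑ i, ∑ j, M i j * (n i : ℚ) * (n j : ℚ) = 1 from hn, mul_one] at h1
  have h2 : ((n i : ℕ) : ℚ) ≤ (n i : ℚ) ^ 2 := by
    have : n i ≤ n i ^ 2 := Nat.le_self_pow (by norm_num) _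
    exact_mod_cast this
  have h3 := Nat.le_ceil (2 * B (w i) (w i))
  exact_mod_cast (h2.trans h1).trans h3

/-! ### Cones -/

theorem cone_zero (C : Finset (V → ℤ)) : (0 : V → ℚ) ∈ coneOf C :=
  ⟨0, fun _ => le_refl _, by simp⟩

theorem cone_add {C : Finset (V → ℤ)} {x y : V → ℚ} (hx : x ∈ coneOf C) (hy : y ∈ coneOf C) :
    x + y ∈ coneOf C := by
  obtain ⟨f, hf, rfl⟩ := hx
  obtain ⟨g, hg, rfl⟩ := hy
  refine ⟨f + g, fun c => add_nonneg (hf c) (hg c), ?_⟩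
  rw [← Finset.sum_add_distrib]
  exact Finset.sum_congr rfl fun c _ => by rw [Pi.add_apply, add_smul]

theorem cone_smul {C : Finset (V → ℤ)} {x : V → ℚ} {q : ℚ} (hq : 0 ≤ q) (hx : x ∈ coneOf C) :
    q • x ∈ coneOf C := by
  obtain ⟨f, hf, rfl⟩ := hx
  refine ⟨q • f, fun c => mul_nonneg hq (hf c), ?_⟩
  rw [Finset.smul_sum]
  exact Finset.sum_congr rfl fun c _ => by rw [Pi.smul_apply, smul_eq_mul, mul_smul]

theorem cone_mem {C : Finset (V → ℤ)} {c : V → ℤ} (hc : c ∈ C) : intQ c ∈ coneOf C := by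
  classical
  refine ⟨fun d => if d = c then 1 else 0, fun d => by dsimp only; split_ifs <;> norm_num, ?_⟩
  simp [ite_smul, hc]

theorem cone_sum {C : Finset (V → ℤ)} {ι : Type} (s : Finset ι) (f : ι → V → ℚ)
    (hf : ∀ i ∈ s, f i ∈ coneOf C) : ∑ i ∈ s, f i ∈ coneOf C := by
  classical
  induction s using Finset.induction_on with
  | empty => simpa using cone_zero C
  | insert a s ha ih =>
    rw [Finset.sum_insert ha]
    exact cone_add (hf a (Finset.mem_insert_self a s))
      (ih fun i hi => hf i (Finset.mem_insert_of_mem hi))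

theorem cone_le {C D : Finset (V → ℤ)} (hCD : ∀ c ∈ C, intQ c ∈ coneOf D) :
    coneOf C ⊆ coneOf D := by
  rintro x ⟨f, hf, rfl⟩
  exact cone_sum _ _ fun c hc => cone_smul (hf c) (hCD c hc)

theorem intQ_natZ_add (x y : V → ℕ) : intQ (natZ (x + y)) = intQ (natZ x) + intQ (natZ y) := by
  funext v
  simp [intQ, natZ]

theorem intQ_natZ_zero : intQ (natZ (0 : V → ℕ)) = 0 := by
  funext v
  simp [intQ, natZ]

theorem intQ_natZ_comb {l : ℕ} (n : Fin l → ℕ) (b : Fin l → V → ℕ) :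
    intQ (natZ (∑ j, n j • b j)) = ∑ j, (n j : ℚ) • intQ (natZ (b j)) := by
  funext v
  simp [intQ, natZ]

theorem cone_multiset {C : Finset (V → ℤ)} (T : Multiset (V → ℕ)) :
    (∀ β ∈ T, intQ (natZ β) ∈ coneOf C) → intQ (natZ T.sum) ∈ coneOf C := by
  induction T using Multiset.induction_on with
  | empty => intro _; rw [Multiset.sum_zero, intQ_natZ_zero]; exact cone_zero C
  | cons a T ih =>
    intro hT
    rw [Multiset.sum_cons, intQ_natZ_add]
    exact cone_add (hT a (Multiset.mem_cons_self a T))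
      (ih fun β hβ => hT β (Multiset.mem_cons_of_mem hβ))

theorem natZ_inj {x y : V → ℕ} (hxy : natZ x = natZ y) : x = y := by
  funext v
  have := congrFun hxy v
  simpa [natZ] using this

theorem clear_denoms {l : ℕ} (c : Fin l → ℚ) (hc : ∀ j, 0 ≤ c j) :
    ∃ N : ℕ, 0 < N ∧ ∃ n : Fin l → ℕ, ∀ j, (N : ℚ) * c j = n j := by
  refine ⟨∏ j, (c j).den, Finset.prod_pos fun j _ => (c j).den_pos,
    fun j => (∏ i ∈ Finset.univ.erase j, (c i).den) * (c j).num.toNat, fun j => ?_⟩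
  rw [← Finset.mul_prod_erase Finset.univ _ (Finset.mem_univ j)]
  have h1 : ((c j).den : ℚ) * c j = ((c j).num.toNat : ℚ) := by
    have h2 : (((c j).num.toNat : ℤ) : ℚ) = ((c j).num : ℚ) := by
      rw [Int.toNat_of_nonneg (Rat.num_nonneg.mpr (hc j))]
    rw [mul_comm, Rat.mul_den_eq_num]
    exact h2.symm.trans (Int.cast_natCast _)
  push_cast
  rw [← h1]
  ring

/-! ### Paths -/

theorem path_append {i j k : V} {p q : List A} (hp : IsPathFrom t h i p j)
    (hq : IsPathFrom t h j q k) : IsPathFrom t h i (p ++ q) k := by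
  induction p generalizing i with
  | nil => cases hp; exact hq
  | cons a p ih => exact ⟨hp.1, ih hp.2⟩

theorem gamma_self (hQ : Acyclic t h) (i : V) : gammaRoot t h i i = 1 := by
  have : {p : List A | IsPathFrom t h i p i} = {[]} := by
    ext p
    constructor
    · intro hp
      exact hQ i p hp
    · rintro rfl
      exact (rfl : i = i)
  unfold gammaRoot
  rw [this, Set.ncard_singleton]

theorem gamma_path {i j : V} (h1 : gammaRoot t h i j = 1) : ∃ p, IsPathFrom t h i p j := by
  obtain ⟨p, hp⟩ := Set.ncard_eq_one.mp h1
  refine ⟨p, ?_⟩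
  have : p ∈ {p : List A | IsPathFrom t h i p j} := by rw [hp]; rfl
  exact this

theorem gamma_inj (hQ : Acyclic t h) {i j : V} (hij : gammaRoot t h i = gammaRoot t h j) :
    i = j := by
  obtain ⟨p, hp⟩ := gamma_path (t := t) (h := h) (i := i) (j := j) (by
    rw [hij]; exact gamma_self hQ j)
  obtain ⟨q, hq⟩ := gamma_path (t := t) (h := h) (i := j) (j := i) (by
    rw [← hij]; exact gamma_self hQ i)
  have := hQ i _ (path_append hp hq)
  rw [List.append_eq_nil_iff] at this
  rw [this.1] at hp
  exact hp

theorem neg_gamma_inj (hQ : Acyclic t h) {i j : V}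
    (hij : (fun v => -(gammaRoot t h i v : ℤ)) = (fun v => -(gammaRoot t h j v : ℤ))) :
    i = j := by
  apply gamma_inj hQ
  funext v
  have := congrFun hij v
  simpa using this

theorem natZ_ne_gamma (hQ : Acyclic t h) (β : V → ℕ) (i : V) :
    natZ β ≠ fun v => -(gammaRoot t h i v : ℤ) := by
  intro h1
  have := congrFun h1 i
  simp only [natZ, gamma_self hQ i] at this
  omega

/-! ### The Euler form on combinations -/

theorem euler_comb {l : ℕ} (b : Fin l → V → ℕ) (n : Fin l → ℕ) :
    ((eulerForm t h (natZ (∑ j, n j • b j)) (natZ (∑ j, n j • b j)) : ℤ) : ℚ) =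
      ∑ i, ∑ j, ((eulerForm t h (natZ (b i)) (natZ (b j)) : ℤ) : ℚ) * (n i : ℚ) * (n j : ℚ) := by
  have h1 : natZ (∑ j, n j • b j) = ∑ j, (n j : ℤ) • natZ (b j) := by
    funext v
    simp [natZ]
  rw [h1, eulerForm_sum_left]
  push_cast
  refine Finset.sum_congr rfl fun i _ => ?_
  rw [eulerForm_sum_right]
  push_cast
  refine Finset.sum_congr rfl fun j _ => ?_
  rw [eulerForm_smul_left, eulerForm_smul_right]
  push_cast
  ring

namespace QuivRep

theorem exc_euler {X : QuivRep K V A t h} (hX : X.IsExceptional) :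
    eulerForm t h (natZ X.dimVec) (natZ X.dimVec) = 1 := by
  have h1 := euler_eq X X
  have h2 : extDim X X = 0 := hX.1
  have h3 : homDim X X = 1 := hX.2
  rw [h2, h3] at h1
  simpa using h1.symm

theorem schur_indec {X : QuivRep K V A t h} (hX : X.IsSchur) : Indec X := by
  refine ⟨schur_nonzero hX, ?_⟩
  intro e he hee
  obtain ⟨c, rfl⟩ := schur_scalar hX e he
  obtain ⟨v, x, hx⟩ := schur_nonzero hX
  have h1 := LinearMap.congr_fun (congrFun hee v) x
  have h2 : c • c • x = c • x := by simpa using h1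
  have h3 : (c * c - c) • x = 0 := by rw [sub_smul, mul_smul, h2, sub_self]
  have h4 : c * (c - 1) = 0 := by
    have := (smul_eq_zero.mp h3).resolve_right hx
    rw [mul_sub, mul_one]
    exact this
  rcases mul_eq_zero.mp h4 with h5 | h5
  · left
    rw [h5, zero_smul]
  · right
    rw [sub_eq_zero.mp h5, one_smul]

theorem exists_config {l : ℕ} {E : Fin l → QuivRep K V A t h} (hE : Orth E) (n : Fin l → ℕ) :
    ∃ S, Config E (∑ j, n j • (E j).dimVec) S := by
  refine ⟨∑ j, n j • ({E j} : Multiset (QuivRep K V A t h)), ?_, ?_⟩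
  · intro Z hZ
    rw [Multiset.mem_sum] at hZ
    obtain ⟨j, -, hj⟩ := hZ
    have := Multiset.mem_of_mem_nsmul hj
    rw [Multiset.mem_singleton] at this
    subst this
    exact ⟨Filt.simple E j, schur_indec (hE.1 j)⟩
  · rw [← Multiset.coe_mapAddMonoidHom, map_sum, Multiset.sum_sum]
    refine Finset.sum_congr rfl fun j _ => ?_
    rw [map_nsmul, Multiset.sum_nsmul]
    simp

/-- A quiver exceptional sequence is represented by an orthogonal family of bricks. -/
theorem exists_orth [Infinite K] {l : ℕ} {b : Fin l → V → ℕ} (hq : IsQES K t h b) :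
    ∃ E : Fin l → QuivRep K V A t h, (∀ j, (E j).dimVec = b j) ∧ (∀ j, (E j).IsExceptional) ∧
      Orth E := by
  choose E hEd hE using hq.1
  have key : ∀ i j : Fin l, i < j → homDim (E i) (E j) = 0 ∧ homDim (E j) (E i) = 0 := by
    intro i j hij
    obtain ⟨h1, h2, h3⟩ := hq.2 i j hij
    have hne1 : {n | ∃ X Y : QuivRep K V A t h, X.dimVec = b i ∧ Y.dimVec = b j ∧
        homDim X Y = n}.Nonempty := ⟨_, E i, E j, hEd i, hEd j, rfl⟩
    have hne2 : {n | ∃ X Y : QuivRep K V A t h, X.dimVec = b i ∧ Y.dimVec = b j ∧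
        extDim X Y = n}.Nonempty := ⟨_, E i, E j, hEd i, hEd j, rfl⟩
    have m1 := Nat.sInf_mem hne1
    have m2 := Nat.sInf_mem hne2
    obtain ⟨X1, Y1, hX1, hY1, hh⟩ := m1
    obtain ⟨X2, Y2, hX2, hY2, he⟩ := m2
    have hh' : homDim X1 Y1 = 0 := hh.trans h1
    have he' : extDim X2 Y2 = 0 := he.trans h2
    have e1 := transfer_left (hE i) (hX2.trans (hEd i).symm) Y2 he'
    have e2 := transfer_right (hE j) (hY2.trans (hEd j).symm) (E i) e1
    have a1 := euler_eq X1 Y1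
    have a2 := euler_eq (E i) (E j)
    rw [hX1, hY1] at a1
    rw [hEd, hEd] at a2
    have h0 : homDim (E i) (E j) = 0 := by omega
    refine ⟨h0, hom_orth (hE j) (hE i) h0 e2 ?_⟩
    rw [hEd, hEd]
    exact h3
  refine ⟨E, hEd, hE, fun j => (hE j).2, ?_⟩
  intro i j hij
  rcases lt_or_gt_of_ne hij with h1 | h1
  · exact (key i j h1).1
  · exact (key j i h1).2

end QuivRep

end Helpers

section Helpers

set_option linter.unusedSectionVars false

variable {K} {t h : A → V}

namespace QuivRep

/-- The main argument. -/
theorem main_aux [IsAlgClosed K] (hQ : Acyclic t h)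
    (l m : ℕ) (b : Fin l → V → ℕ) (g : Fin m → V)
    (hbinj : Function.Injective b) (hginj : Function.Injective g)
    (hqes : IsQES K t h b) (hzero : ∀ j k, b j (g k) = 0)
    (E : Finset (V → ℤ))
    (hE : (E : Set (V → ℤ)) =
      (Set.range fun j => natZ (b j)) ∪
      (Set.range fun k => (fun v => -(gammaRoot t h (g k) v : ℤ))))
    (hposdef : ∀ η : Fin l → ℚ, η ≠ 0 →
      0 < (∑ i, η i ^ 2) + ∑ i, ∑ j,
        (if i = j then 0 else
          ((eulerForm t h (natZ (b i)) (natZ (b j)) : ℤ) : ℚ) * η i * η j)) :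
    ∃ (r : ℕ) (C : Fin r → Finset (V → ℤ)),
      (∀ k, IsCompatible K t h (C k)) ∧
      coneOf E = {x | ∃ k, x ∈ coneOf (C k)} := by
  classical
  have : Infinite K := IsAlgClosed.instInfinite
  obtain ⟨R, hRd, hRe, hR⟩ := exists_orth hqes
  -- the Tits form
  have hdiag : ∀ j, eulerForm t h (natZ (b j)) (natZ (b j)) = 1 := fun j => by
    rw [← hRd]; exact exc_euler (hRe j)
  let M : Matrix (Fin l) (Fin l) ℚ := fun i j => ((eulerForm t h (natZ (b i)) (natZ (b j)) : ℤ) : ℚ)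
  have hM : ∀ η : Fin l → ℚ, η ≠ 0 → 0 < ∑ i, ∑ j, M i j * η i * η j := by
    intro η hη
    refine lt_of_lt_of_eq (hposdef η hη) ?_
    rw [← Finset.sum_add_distrib]
    refine Finset.sum_congr rfl fun i _ => ?_
    rw [← Finset.add_sum_erase _ _ (Finset.mem_univ i),
      ← Finset.add_sum_erase _ (fun j => M i j * η i * η j) (Finset.mem_univ i)]
    have h1 : M i i = 1 := by simp [M, hdiag]
    rw [if_pos rfl, h1, zero_add]
    congr 1
    · ring
    · refine Finset.sum_congr rfl fun j hj => ?_
      rw [if_neg (Finset.ne_of_mem_erase hj).symm]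
  have hfin := finite_roots M hM
  have hcomb : ∀ X, Filt R X → ∃ n : Fin l → ℕ, X.dimVec = ∑ j, n j • b j := by
    intro X hX
    obtain ⟨n, hn⟩ := hX.dimVec
    refine ⟨n, ?_⟩
    rw [hn]
    exact Finset.sum_congr rfl fun j _ => by rw [hRd]
  have hpos : ∀ X, Filt R X → (∃ v, ∃ x : X.sp v, x ≠ 0) →
      0 < eulerForm t h (natZ X.dimVec) (natZ X.dimVec) := by
    rintro X hX ⟨v, x, hx⟩
    obtain ⟨n, hn⟩ := hcomb X hX
    have hv : X.dimVec v ≠ 0 := by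
      intro h0
      have h1 : Module.finrank K (X.sp v) = 0 := h0
      have := Module.finrank_zero_iff.mp h1
      exact hx (Subsingleton.elim _ _)
    have hq : (0 : ℚ) < ((eulerForm t h (natZ X.dimVec) (natZ X.dimVec) : ℤ) : ℚ) := by
      rw [hn, euler_comb]
      apply hM (fun j => (n j : ℚ))
      intro h0
      apply hv
      rw [hn]
      have h1 : ∀ j, n j = 0 := fun j => by
        have := congrFun h0 j
        simpa using this
      simp [h1]
    exact_mod_cast hq
  -- the candidate roots
  let G : Finset (V → ℤ) := Finset.univ.image fun k => (fun v => -(gammaRoot t h (g k) v : ℤ))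
  let All : Finset (V → ℤ) := hfin.toFinset.image (fun n => natZ (∑ j, n j • b j)) ∪ G
  have hbE : ∀ j, natZ (b j) ∈ E := by
    intro j
    have : natZ (b j) ∈ (E : Set (V → ℤ)) := by rw [hE]; exact Or.inl ⟨j, rfl⟩
    exact this
  have hGE : ∀ c ∈ G, c ∈ E := by
    intro c hc
    obtain ⟨k, -, rfl⟩ := Finset.mem_image.mp hc
    have : (fun v => -(gammaRoot t h (g k) v : ℤ)) ∈ (E : Set (V → ℤ)) := by
      rw [hE]; exact Or.inr ⟨k, rfl⟩
    exact this
  have hAll : ∀ c ∈ All, intQ c ∈ coneOf E := by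
    intro c hc
    rcases Finset.mem_union.mp hc with h1 | h1
    · obtain ⟨n, -, rfl⟩ := Finset.mem_image.mp h1
      rw [intQ_natZ_comb]
      exact cone_sum _ _ fun j _ => cone_smul (Nat.cast_nonneg _) (cone_mem (hbE j))
    · exact cone_mem (hGE c h1)
  have hEeq : E = Finset.univ.image (fun j => natZ (b j)) ∪ G := by
    apply Finset.coe_injective
    rw [hE]
    simp [G]
  have hdisj : Disjoint (Finset.univ.image (fun j => natZ (b j))) G := by
    rw [Finset.disjoint_left]
    intro c hc hc2
    obtain ⟨j, -, rfl⟩ := Finset.mem_image.mp hc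
    obtain ⟨k, -, hk⟩ := Finset.mem_image.mp hc2
    exact natZ_ne_gamma hQ (b j) (g k) hk.symm
  let CC : Finset (Finset (V → ℤ)) := All.powerset.filter fun C => IsCompatible K t h C
  -- covering
  have hcover : ∀ x ∈ coneOf E, ∃ C ∈ CC, x ∈ coneOf C := by
    rintro x ⟨lam, hlam, rfl⟩
    obtain ⟨N, hN, n, hn⟩ := clear_denoms (fun j => lam (natZ (b j))) (fun j => hlam _)
    obtain ⟨S, ⟨hS1, hS2⟩, hS3⟩ := exists_rigid_config hR (exists_config hR n)
    have hexc : ∀ Z ∈ S, Z.IsExceptional := fun Z hZ =>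
      indec_exceptional hR hpos _ Z rfl (hS1 Z hZ).1 (hS1 Z hZ).2
    let D : Finset (V → ℤ) := (S.map fun Z => natZ Z.dimVec).toFinset
    have hD : ∀ c, c ∈ D ↔ ∃ Z ∈ S, natZ Z.dimVec = c := by
      intro c
      simp [D]
    refine ⟨D ∪ G, ?_, ?_⟩
    · refine Finset.mem_filter.mpr ⟨Finset.mem_powerset.mpr ?_, ?_, ?_⟩
      · apply Finset.union_subset_union _ (Finset.Subset.refl G)
        intro c hc
        obtain ⟨Z, hZ, rfl⟩ := (hD c).mp hc
        obtain ⟨n', hn'⟩ := hcomb Z (hS1 Z hZ).1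
        refine Finset.mem_image.mpr ⟨n', ?_, by rw [hn']⟩
        rw [Set.Finite.mem_toFinset]
        have h1 := exc_euler (hexc Z hZ)
        rw [hn'] at h1
        have h2 := euler_comb (t := t) (h := h) b n'
        rw [h1] at h2
        exact h2.symm.trans (by simp)
      · intro c hc
        rcases Finset.mem_union.mp hc with h1 | h1
        · obtain ⟨Z, hZ, rfl⟩ := (hD c).mp h1
          exact Or.inl ⟨Z.dimVec, ⟨Z, rfl, hexc Z hZ⟩, rfl⟩
        · obtain ⟨k, -, rfl⟩ := Finset.mem_image.mp h1
          exact Or.inr ⟨g k, rfl⟩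
      · intro c hc d hd hcd
        have hroot : ∀ β : V → ℕ, natZ β ∈ D ∪ G → ∃ Z ∈ S, Z.dimVec = β := by
          intro β hβ
          rcases Finset.mem_union.mp hβ with h1 | h1
          · obtain ⟨Z, hZ, hZ2⟩ := (hD _).mp h1
            exact ⟨Z, hZ, natZ_inj hZ2⟩
          · obtain ⟨k, -, hk⟩ := Finset.mem_image.mp h1
            exact absurd hk.symm (natZ_ne_gamma hQ β (g k))
        refine ⟨?_, ?_⟩
        · rintro β₁ β₂ - - rfl rfl
          obtain ⟨X, hX, rfl⟩ := hroot β₁ hc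
          obtain ⟨Y, hY, rfl⟩ := hroot β₂ hd
          obtain ⟨S', rfl⟩ := Multiset.exists_cons_of_mem hX
          have hYS : Y ∈ S' := by
            rcases Multiset.mem_cons.mp hY with h1 | h1
            · exact absurd (by rw [h1]) hcd
            · exact h1
          obtain ⟨S'', rfl⟩ := Multiset.exists_cons_of_mem hYS
          have h0 := hS3 X Y S'' rfl
          exact Nat.sInf_eq_zero.mpr (Or.inl ⟨X, Y, rfl, rfl, h0⟩)
        · rintro β i - rfl rfl
          obtain ⟨X, hX, rfl⟩ := hroot β hc
          have hiG : ∃ k, g k = i := by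
            rcases Finset.mem_union.mp hd with h1 | h1
            · obtain ⟨Z, -, hZ2⟩ := (hD _).mp h1
              exact absurd hZ2 (natZ_ne_gamma hQ Z.dimVec i)
            · obtain ⟨k, -, hk⟩ := Finset.mem_image.mp h1
              exact ⟨k, neg_gamma_inj hQ hk⟩
          obtain ⟨k, rfl⟩ := hiG
          obtain ⟨n', hn'⟩ := hcomb X (hS1 X hX).1
          rw [hn']
          simp [hzero]
    · rw [hEeq, Finset.sum_union hdisj]
      apply cone_add
      · rw [Finset.sum_image (fun i _ j _ hij => hbinj (natZ_inj hij))]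
        have hsum : intQ (natZ (∑ j, n j • b j)) ∈ coneOf (D ∪ G) := by
          have h1 : ∑ j, n j • b j = (S.map QuivRep.dimVec).sum := by
            rw [hS2]
            exact Finset.sum_congr rfl fun j _ => by rw [hRd]
          rw [h1]
          apply cone_multiset
          intro β hβ
          obtain ⟨Z, hZ, rfl⟩ := Multiset.mem_map.mp hβ
          exact cone_mem (Finset.mem_union_left _ ((hD _).mpr ⟨Z, hZ, rfl⟩))
        have hN0 : (N : ℚ) ≠ 0 := by exact_mod_cast hN.ne'
        have h2 : ∑ j, lam (natZ (b j)) • intQ (natZ (b j)) =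
            (N : ℚ)⁻¹ • intQ (natZ (∑ j, n j • b j)) := by
          rw [intQ_natZ_comb, Finset.smul_sum]
          refine Finset.sum_congr rfl fun j _ => ?_
          rw [← hn j, smul_smul, inv_mul_cancel_left₀ hN0]
        rw [h2]
        exact cone_smul (by positivity) hsum
      · exact cone_sum _ _ fun c hc =>
          cone_smul (hlam c) (cone_mem (Finset.mem_union_right _ hc))
  refine ⟨CC.card, fun k => (CC.equivFin.symm k).1, ?_, ?_⟩
  · intro k
    exact (Finset.mem_filter.mp (CC.equivFin.symm k).2).2
  · ext x
    constructor
    · intro hx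
      obtain ⟨C, hC, hxC⟩ := hcover x hx
      refine ⟨CC.equivFin ⟨C, hC⟩, ?_⟩
      dsimp only
      rw [Equiv.symm_apply_apply]
      exact hxC
    · rintro ⟨k, hk⟩
      have h1 := Finset.mem_powerset.mp (Finset.mem_filter.mp (CC.equivFin.symm k).2).1
      exact cone_le (fun c hc => hAll c (h1 hc)) hk

end QuivRep

end Helpers

/-- If `𝓔` is a representation-finite quiver exceptional set (the Tits
form of its Ext-quiver `Q(𝓔)` is positive definite), then `Cone(𝓔)` is a finite union of
cones on compatible subsets of `Ψ(Q)_{≥ −1}`. -/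
theorem stmt15 [IsAlgClosed K] [CharZero K] (t h : A → V) (hQ : Acyclic t h)
    (l m : ℕ) (b : Fin l → V → ℕ) (g : Fin m → V)
    (hbinj : Function.Injective b) (hginj : Function.Injective g)
    (hqes : IsQES K t h b) (hzero : ∀ j k, b j (g k) = 0)
    (E : Finset (V → ℤ))
    (hE : (E : Set (V → ℤ)) =
      (Set.range fun j => natZ (b j)) ∪
      (Set.range fun k => (fun v => -(gammaRoot t h (g k) v : ℤ))))
    (hposdef : ∀ η : Fin l → ℚ, η ≠ 0 →
      0 < (∑ i, η i ^ 2) + ∑ i, ∑ j,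
        (if i = j then 0 else
          ((eulerForm t h (natZ (b i)) (natZ (b j)) : ℤ) : ℚ) * η i * η j)) :
    ∃ (r : ℕ) (C : Fin r → Finset (V → ℤ)),
      (∀ k, IsCompatible K t h (C k)) ∧
      coneOf E = {x | ∃ k, x ∈ coneOf (C k)} := by
  exact QuivRep.main_aux hQ l m b g hbinj hginj hqes hzero E hE hposdef

end
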